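/- arXiv:2402.17576 — 9 statements merged into one kernel-verified Lean document; each statement's English description precedes it below -/
import Mathlib

section
/- Let c be a real number with |c| < 1 and set σ = √(1−c²). Define v(x,t) = 2(1−c²)/(cosh(σ(x−ct)) − c) and η(x,t) = c·v(x,t) − (1/2)·v(x,t)². Then the pair (η, v) is a smooth solution on ℝ×ℝ of the good Kaup–Broer–Kupershmidt system: ∂_t η + ∂_x v + ∂_x(η v) − ∂_x³ v = 0 and ∂_t v + ∂_x η + v ∂_x v = 0. -/
/-!
For waves `v = f (x - c t)`, `η = g (x - c t)` each equation of the system is the `ξ`-derivative of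
an algebraic-differential relation: the second one integrates to `g = c f - f² / 2 + B` and the
first one to `f'' = f - c g + f g - A`. For `A = B = 0`, eliminating `g` leaves the oscillator
`f'' = (1 - c²) f + (3 c / 2) f² - f³ / 2`, whose homoclinic orbit is a multiple of
`u = (cosh (σ ξ) - c)⁻¹`: since `cosh² - sinh² = 1`, `u''` is a cubic polynomial in `u`.
-/

/-- The pair `(η, v)`, as functions of `x` and then `t`, satisfies the two equations of the good
Kaup–Broer–Kupershmidt system at every point. Since `deriv` is `0` where the derivative does not
exist, this describes classical solutions only together with smoothness of `η` and `v`. -/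
structure IsGoodKBKSolution (η v : ℝ → ℝ → ℝ) : Prop where
  elevation_eq : ∀ x t : ℝ,
    deriv (fun s => η x s) t + deriv (fun y => v y t) x
      + deriv (fun y => η y t * v y t) x - iteratedDeriv 3 (fun y => v y t) x = 0
  velocity_eq : ∀ x t : ℝ,
    deriv (fun s => v x s) t + deriv (fun y => η y t) x + v x t * deriv (fun y => v y t) x = 0

theorem deriv_comp_const_sub_mul_left {𝕜 F : Type*} [NontriviallyNormedField 𝕜]
    [NormedAddCommGroup F] [NormedSpace 𝕜 F] (f : 𝕜 → F) (a c t : 𝕜) :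
    deriv (fun s => f (a - c * s)) t = -(c • deriv f (a - c * t)) := by
  rw [deriv_comp_mul_left c (fun r => f (a - r)), deriv_comp_const_sub, smul_neg]

theorem isGoodKBKSolution_travellingWave_iff {f g : ℝ → ℝ} {c : ℝ} :
    IsGoodKBKSolution (fun x t => g (x - c * t)) (fun x t => f (x - c * t)) ↔
      (∀ ξ, -(c * deriv g ξ) + deriv f ξ + deriv (fun ζ => g ζ * f ζ) ξ
        - iteratedDeriv 3 f ξ = 0) ∧
      ∀ ξ, -(c * deriv f ξ) + deriv g ξ + f ξ * deriv f ξ = 0 := by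
  have deriv_space (h : ℝ → ℝ) (x t : ℝ) :
      deriv (fun y => h (y - c * t)) x = deriv h (x - c * t) := deriv_comp_sub_const ..
  have deriv_time (h : ℝ → ℝ) (x t : ℝ) :
      deriv (fun s => h (x - c * s)) t = -(c * deriv h (x - c * t)) :=
    deriv_comp_const_sub_mul_left ..
  constructor
  · rintro ⟨helevation, hvelocity⟩
    refine ⟨fun ξ => ?_, fun ξ => ?_⟩
    · simpa [deriv_time] using helevation ξ 0
    · simpa [deriv_time] using hvelocity ξ 0
  · rintro ⟨helevation, hvelocity⟩
    refine ⟨fun x t => ?_, fun x t => ?_⟩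
    · rw [deriv_time g, deriv_space f, deriv_space fun ζ => g ζ * f ζ, iteratedDeriv_comp_sub_const]
      exact helevation _
    · rw [deriv_time f, deriv_space f, deriv_space g]
      exact hvelocity _

theorem isGoodKBKSolution_travellingWave_of_first_integrals {f g : ℝ → ℝ} {A B c : ℝ}
    (hf : Differentiable ℝ f)
    (hvelocity : ∀ ξ, g ξ = c * f ξ - f ξ ^ 2 / 2 + B)
    (helevation : ∀ ξ, iteratedDeriv 2 f ξ = f ξ - c * g ξ + g ξ * f ξ - A) :
    IsGoodKBKSolution (fun x t => g (x - c * t)) (fun x t => f (x - c * t)) := by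
  have hasDerivAt_f (ξ : ℝ) : HasDerivAt f (deriv f ξ) ξ := (hf ξ).hasDerivAt
  have hasDerivAt_g (ξ : ℝ) : HasDerivAt g (c * deriv f ξ - f ξ * deriv f ξ) ξ := by
    rw [funext hvelocity]
    refine ((((hasDerivAt_f ξ).const_mul c).sub
      (((hasDerivAt_f ξ).pow 2).div_const 2)).add_const B).congr_deriv ?_
    ring
  have iteratedDeriv_three (ξ : ℝ) : iteratedDeriv 3 f ξ =
      deriv f ξ - c * deriv g ξ + deriv (fun ζ => g ζ * f ζ) ξ := by
    have hgf : DifferentiableAt ℝ (fun ζ => g ζ * f ζ) ξ :=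
      (hasDerivAt_g ξ).differentiableAt.mul (hf ξ)
    rw [iteratedDeriv_succ, funext helevation]
    exact ((((hasDerivAt_f ξ).sub ((hasDerivAt_g ξ).differentiableAt.hasDerivAt.const_mul c)).add
      hgf.hasDerivAt).sub_const A).deriv
  refine isGoodKBKSolution_travellingWave_iff.2 ⟨fun ξ => ?_, fun ξ => ?_⟩
  · rw [iteratedDeriv_three]
    ring
  · rw [(hasDerivAt_g ξ).deriv]
    ring

section InvCoshSub

open Real

variable {c : ℝ} (σ : ℝ)

theorem cosh_sub_ne_zero_of_lt_one (hc : c < 1) (x : ℝ) : cosh x - c ≠ 0 :=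
  (sub_pos.2 (hc.trans_le (one_le_cosh x))).ne'

theorem contDiff_inv_cosh_mul_sub {n : WithTop ℕ∞} (hc : c < 1) :
    ContDiff ℝ n fun ξ => (cosh (σ * ξ) - c)⁻¹ :=
  ((contDiff_const.mul contDiff_id).cosh.sub contDiff_const).inv fun _ =>
    cosh_sub_ne_zero_of_lt_one hc _

theorem hasDerivAt_inv_cosh_mul_sub (hc : c < 1) (ξ : ℝ) :
    HasDerivAt (fun ζ => (cosh (σ * ζ) - c)⁻¹)
      (-(σ * sinh (σ * ξ)) / (cosh (σ * ξ) - c) ^ 2) ξ := by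
  refine ((((hasDerivAt_id ξ).const_mul σ).cosh.sub_const c).fun_inv
    (cosh_sub_ne_zero_of_lt_one hc _)).congr_deriv ?_
  simp only [id, mul_one, mul_comm]

theorem iteratedDeriv_two_inv_cosh_mul_sub (hc : c < 1) (ξ : ℝ) :
    iteratedDeriv 2 (fun ζ => (cosh (σ * ζ) - c)⁻¹) ξ =
      σ ^ 2 * ((cosh (σ * ξ) - c)⁻¹ + 3 * c * (cosh (σ * ξ) - c)⁻¹ ^ 2
        - 2 * (1 - c ^ 2) * (cosh (σ * ξ) - c)⁻¹ ^ 3) := by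
  have hD : cosh (σ * ξ) - c ≠ 0 := cosh_sub_ne_zero_of_lt_one hc _
  have hlin : HasDerivAt (fun ζ => σ * ζ) σ ξ := by simpa using (hasDerivAt_id ξ).const_mul σ
  have quotient_rule := (hlin.sinh.const_mul σ).fun_neg.fun_div
    ((hlin.cosh.sub_const c).fun_pow 2) (pow_ne_zero 2 hD)
  rw [iteratedDeriv_succ, iteratedDeriv_one,
    funext fun ζ => (hasDerivAt_inv_cosh_mul_sub σ hc ζ).deriv, quotient_rule.deriv]
  field_simp
  linear_combination 2 * σ ^ 2 * (cosh (σ * ξ) - c) * sinh_sq (σ * ξ)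

end InvCoshSub

/-- The profile `2 (1 - c²) / (cosh (σ ξ) - c)`, `σ = √(1 - c²)`, of the velocity `v` of the
solitary wave of speed `c`, as a function of `ξ = x - c t`. -/
noncomputable def solitaryWaveProfile (c ξ : ℝ) : ℝ :=
  2 * (1 - c ^ 2) / (Real.cosh (Real.sqrt (1 - c ^ 2) * ξ) - c)

theorem solitaryWaveProfile_eq_const_mul_inv (c : ℝ) :
    solitaryWaveProfile c =
      fun ξ => 2 * (1 - c ^ 2) * (Real.cosh (Real.sqrt (1 - c ^ 2) * ξ) - c)⁻¹ :=
  funext fun _ => div_eq_mul_inv _ _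

theorem contDiff_solitaryWaveProfile {n : WithTop ℕ∞} {c : ℝ} (hc : c < 1) :
    ContDiff ℝ n (solitaryWaveProfile c) := by
  rw [solitaryWaveProfile_eq_const_mul_inv]
  exact contDiff_const.mul (contDiff_inv_cosh_mul_sub _ hc)

theorem iteratedDeriv_two_solitaryWaveProfile {c : ℝ} (hc : |c| < 1) (ξ : ℝ) :
    iteratedDeriv 2 (solitaryWaveProfile c) ξ =
      (1 - c ^ 2) * solitaryWaveProfile c ξ + 3 * c / 2 * solitaryWaveProfile c ξ ^ 2
        - solitaryWaveProfile c ξ ^ 3 / 2 := by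
  have hσ : Real.sqrt (1 - c ^ 2) ^ 2 = 1 - c ^ 2 :=
    Real.sq_sqrt (sub_nonneg.2 ((sq_lt_one_iff_abs_lt_one c).2 hc).le)
  rw [solitaryWaveProfile_eq_const_mul_inv, iteratedDeriv_const_mul_field,
    iteratedDeriv_two_inv_cosh_mul_sub _ (abs_lt.1 hc).2, hσ]
  ring

theorem isGoodKBKSolution_solitaryWave {c : ℝ} (hc : |c| < 1) :
    IsGoodKBKSolution
      (fun x t => c * solitaryWaveProfile c (x - c * t)
        - (1 / 2) * solitaryWaveProfile c (x - c * t) ^ 2)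
      (fun x t => solitaryWaveProfile c (x - c * t)) := by
  refine isGoodKBKSolution_travellingWave_of_first_integrals (A := 0) (B := 0)
    (g := fun ξ => c * solitaryWaveProfile c ξ - (1 / 2) * solitaryWaveProfile c ξ ^ 2)
    ((contDiff_solitaryWaveProfile (abs_lt.1 hc).2).differentiable one_ne_zero)
    (fun ξ => by ring) fun ξ => ?_
  rw [iteratedDeriv_two_solitaryWaveProfile hc]
  ring

/-- The explicit solitary wave `(η, v)` of speed `c`, `|c| < 1`, is a smooth solution of the
good Kaup–Broer–Kupershmidt system
`∂_t η + ∂_x v + ∂_x(η v) − ∂_x³ v = 0`, `∂_t v + ∂_x η + v ∂_x v = 0`. -/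
theorem stmt_0 (c : ℝ) (hc : |c| < 1)
    (v η : ℝ → ℝ → ℝ)
    (hv : ∀ x t, v x t = 2 * (1 - c ^ 2) /
      (Real.cosh (Real.sqrt (1 - c ^ 2) * (x - c * t)) - c))
    (hη : ∀ x t, η x t = c * v x t - (1 / 2) * (v x t) ^ 2) :
    ContDiff ℝ (⊤ : ℕ∞) (fun p : ℝ × ℝ => η p.1 p.2) ∧
    ContDiff ℝ (⊤ : ℕ∞) (fun p : ℝ × ℝ => v p.1 p.2) ∧
    (∀ x t : ℝ,
      deriv (fun s => η x s) t + deriv (fun y => v y t) x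
        + deriv (fun y => η y t * v y t) x - iteratedDeriv 3 (fun y => v y t) x = 0) ∧
    (∀ x t : ℝ,
      deriv (fun s => v x s) t + deriv (fun y => η y t) x
        + v x t * deriv (fun y => v y t) x = 0) := by
  obtain rfl : v = fun x t => solitaryWaveProfile c (x - c * t) := funext₂ hv
  obtain rfl : η = _ := funext₂ hη
  have hv_smooth : ContDiff ℝ (⊤ : ℕ∞) fun p : ℝ × ℝ => solitaryWaveProfile c (p.1 - c * p.2) :=
    (contDiff_solitaryWaveProfile (abs_lt.1 hc).2).comp (by fun_prop)
  have hsol := isGoodKBKSolution_solitaryWave hc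
  exact ⟨by fun_prop, hv_smooth, hsol.elevation_eq, hsol.velocity_eq⟩
end

section
/- Let c ∈ ℝ and let φ : ℝ → ℝ be a C² solution of the equation −φ'' + (1−c²) φ + (3/2) c φ² − (1/2) φ³ = 0 on ℝ such that φ(ξ) → 0 and φ'(ξ) → 0 as ξ → +∞. Then φ satisfies the first-integral identity (φ'(ξ))² = (1−c²) φ(ξ)² + c φ(ξ)³ − (1/4) φ(ξ)⁴ for all ξ ∈ ℝ. Consequently, if |c| > 1, then φ ≡ 0; in other words, for |c| > 1 there is no nontrivial solitary-wave profile. -/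
/-!
The profile equation is Newton's equation `φ'' = W'(φ)` for a quartic `W`, so `(φ')² / 2 - W(φ)` is
conserved, and the decay at `+∞` makes it vanish. Completing the square gives
`2 W(y) = y² (1 - (y / 2 - c)²)`, hence wherever `φ ≠ 0` the value `φ / 2` is within `1` of `c`.
For `|c| > 1` this keeps the nonzero values of `φ` away from `0`, and a continuous function on the
line that comes close to `0` cannot jump over that gap.
-/

open Filter Topology

section Newton

variable {E : Type*} [NormedAddCommGroup E] [InnerProductSpace ℝ E] [CompleteSpace E]
  {W : E → ℝ} {F : E → E} {x v : ℝ → E}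

theorem norm_sq_div_two_sub_eq_of_hasGradientAt (hW : ∀ y, HasGradientAt W (F y) y)
    (hx : ∀ t, HasDerivAt x (v t) t) (hv : ∀ t, HasDerivAt v (F (x t)) t) (s t : ℝ) :
    ‖v s‖ ^ 2 / 2 - W (x s) = ‖v t‖ ^ 2 / 2 - W (x t) := by
  have energy_deriv (r : ℝ) : HasDerivAt (fun r ↦ ‖v r‖ ^ 2 / 2 - W (x r)) 0 r := by
    have potential_deriv := (hW (x r)).hasFDerivAt.comp_hasDerivAt r (hx r)
    refine (((hv r).norm_sq.div_const 2).sub potential_deriv).congr_deriv ?_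
    rw [InnerProductSpace.toDual_apply_apply, real_inner_comm]
    ring
  exact is_const_of_deriv_eq_zero (fun r ↦ (energy_deriv r).differentiableAt)
    (fun r ↦ (energy_deriv r).deriv) s t

theorem norm_sq_div_two_sub_eq_of_tendsto {l : Filter ℝ} [l.NeBot] {a w : E}
    (hW : ∀ y, HasGradientAt W (F y) y) (hx : ∀ t, HasDerivAt x (v t) t)
    (hv : ∀ t, HasDerivAt v (F (x t)) t) (hxa : Tendsto x l (𝓝 a)) (hvw : Tendsto v l (𝓝 w))
    (t : ℝ) : ‖v t‖ ^ 2 / 2 - W (x t) = ‖w‖ ^ 2 / 2 - W a := by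
  have energy_tendsto :
      Tendsto (fun s ↦ ‖v s‖ ^ 2 / 2 - W (x s)) l (𝓝 (‖w‖ ^ 2 / 2 - W a)) :=
    ((hvw.norm.pow 2).div_const 2).sub ((hW a).continuousAt.tendsto.comp hxa)
  refine tendsto_nhds_unique (tendsto_const_nhds.congr fun s ↦ ?_) energy_tendsto
  exact norm_sq_div_two_sub_eq_of_hasGradientAt hW hx hv t s

end Newton

theorem eq_zero_of_forall_eq_zero_or_le_norm {X E : Type*} [TopologicalSpace X]
    [PreconnectedSpace X] [NormedAddCommGroup E] {f : X → E} {m : ℝ} (hf : Continuous f)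
    (hgap : ∀ x, f x = 0 ∨ m ≤ ‖f x‖) {x₀ : X} (hx₀ : ‖f x₀‖ < m) : f = 0 := by
  have zeros_eq : {x | f x = 0} = {x | ‖f x‖ < m} := by
    ext x
    refine ⟨fun hx ↦ ?_, fun hx ↦ (hgap x).resolve_right (not_le.mpr hx)⟩
    simpa [hx.out] using (norm_nonneg _).trans_lt hx₀
  have zeros_clopen : IsClopen {x | f x = 0} :=
    ⟨isClosed_eq hf continuous_const, zeros_eq ▸ isOpen_lt hf.norm continuous_const⟩
  have zeros_univ := zeros_clopen.eq_univ ⟨x₀, (hgap x₀).resolve_right (not_le.mpr hx₀)⟩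
  exact funext fun x ↦ zeros_univ.ge (Set.mem_univ x)

/-- The quartic `W` for which the profile equation of speed `c` reads `φ'' = W'(φ)`. It is the
negative of the mechanical potential energy, so that solitary waves have `(φ')² = 2 W(φ)`. -/
noncomputable def profilePotential (c y : ℝ) : ℝ :=
  ((1 - c ^ 2) * y ^ 2 + c * y ^ 3 - 1 / 4 * y ^ 4) / 2

theorem hasDerivAt_profilePotential (c y : ℝ) :
    HasDerivAt (profilePotential c)
      ((1 - c ^ 2) * y + 3 / 2 * c * y ^ 2 - 1 / 2 * y ^ 3) y := by
  have monomial_deriv (n : ℕ) := hasDerivAt_pow n y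
  refine (((((monomial_deriv 2).const_mul (1 - c ^ 2)).add ((monomial_deriv 3).const_mul c)).sub
    ((monomial_deriv 4).const_mul (1 / 4))).div_const 2).congr_deriv ?_
  push_cast
  ring

theorem profilePotential_zero (c : ℝ) : profilePotential c 0 = 0 := by
  simp [profilePotential]

theorem two_mul_profilePotential (c y : ℝ) :
    2 * profilePotential c y = y ^ 2 * (1 - (y / 2 - c) ^ 2) := by
  unfold profilePotential
  ring

theorem eq_zero_or_le_abs_of_profilePotential_nonneg {c y : ℝ} (h : 0 ≤ profilePotential c y) :
    y = 0 ∨ 2 * (|c| - 1) ≤ |y| := by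
  refine or_iff_not_imp_left.mpr fun hy ↦ ?_
  have factor_nonneg : 0 ≤ 1 - (y / 2 - c) ^ 2 := by
    refine nonneg_of_mul_nonneg_right ?_ (sq_pos_of_ne_zero hy)
    linarith [two_mul_profilePotential c y]
  have dist_le_one : |c - y / 2| ≤ 1 := by
    rw [abs_sub_comm, ← sq_le_one_iff_abs_le_one]
    linarith
  have half_abs : |y / 2| = |y| / 2 := by rw [abs_div, abs_two]
  linarith [abs_sub_abs_le_abs_sub c (y / 2)]

/-- A `C²` solution of the profile equation `−φ'' + (1−c²)φ + (3/2)cφ² − (1/2)φ³ = 0`with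
`φ, φ' → 0` at `+∞` satisfies the first integral
`(φ')² = (1−c²)φ² + cφ³ − (1/4)φ⁴`; consequently, if `|c| > 1` then `φ ≡ 0`. -/
theorem stmt_3 (c : ℝ) (φ : ℝ → ℝ) (hφ : ContDiff ℝ 2 φ)
    (heq : ∀ ξ : ℝ, -deriv (deriv φ) ξ + (1 - c ^ 2) * φ ξ
      + (3 / 2) * c * (φ ξ) ^ 2 - (1 / 2) * (φ ξ) ^ 3 = 0)
    (hlim : Filter.Tendsto φ Filter.atTop (nhds 0))
    (hlim' : Filter.Tendsto (deriv φ) Filter.atTop (nhds 0)) :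
    (∀ ξ : ℝ, (deriv φ ξ) ^ 2
      = (1 - c ^ 2) * (φ ξ) ^ 2 + c * (φ ξ) ^ 3 - (1 / 4) * (φ ξ) ^ 4) ∧
    (1 < |c| → ∀ ξ : ℝ, φ ξ = 0) := by
  have newton (ξ : ℝ) : HasDerivAt (deriv φ)
      ((1 - c ^ 2) * φ ξ + 3 / 2 * c * φ ξ ^ 2 - 1 / 2 * φ ξ ^ 3) ξ :=
    (hφ.differentiable_deriv_two ξ).hasDerivAt.congr_deriv (by linarith [heq ξ])
  have first_integral (ξ : ℝ) : deriv φ ξ ^ 2 = 2 * profilePotential c (φ ξ) := by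
    have energy := norm_sq_div_two_sub_eq_of_tendsto
      (fun y ↦ (hasDerivAt_profilePotential c y).hasGradientAt')
      (fun t ↦ (hφ.differentiable two_ne_zero t).hasDerivAt) newton hlim hlim' ξ
    rw [Real.norm_eq_abs, sq_abs, norm_zero, profilePotential_zero] at energy
    linarith
  refine ⟨fun ξ ↦ (first_integral ξ).trans (mul_div_cancel₀ _ two_ne_zero), fun hc ↦ ?_⟩
  have gap (ξ : ℝ) : φ ξ = 0 ∨ 2 * (|c| - 1) ≤ ‖φ ξ‖ :=
    eq_zero_or_le_abs_of_profilePotential_nonneg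
      (by linarith [first_integral ξ, sq_nonneg (deriv φ ξ)])
  have gap_pos : ‖(0 : ℝ)‖ < 2 * (|c| - 1) := by rw [norm_zero]; linarith
  obtain ⟨ξ₀, small⟩ := (hlim.norm.eventually_lt_const gap_pos).exists
  exact congrFun (eq_zero_of_forall_eq_zero_or_le_norm hφ.continuous gap small)
end

section
/- Let c be a real number with |c| < 1 and ε > 0. Then the function v_{c,ε}(ξ) = 2(1−c²) / ( ε [ cosh(√(1−c²) ε^{−1/2} ξ) − c ] ) is a smooth solution on ℝ of the ordinary differential equation −ε φ'' + (1−c²) φ + (3/2) c ε φ² − (ε²/2) φ³ = 0. -/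
/-!
Put `u x = 1 / (cosh x - c)`, so that `u' = -sinh x * u ^ 2`. Substituting `cosh x = 1 / u + c` and
`sinh x ^ 2 = cosh x ^ 2 - 1` into the second derivative leaves a cubic polynomial in `u`:
`u'' = u + 3 * c * u ^ 2 - 2 * (1 - c ^ 2) * u ^ 3`. The profile equation is this one for
`φ ξ = a * u (k * ξ)`: matching the linear terms forces `ε * k ^ 2 = 1 - c ^ 2`, and matching the
quadratic and cubic ones forces `ε * a = 2 * (1 - c ^ 2)`.
-/

open Real

/-- The normalized solitary wave `1 / (cosh x - c)` of speed `c`, before rescaling its amplitude and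
width. It has the junk value `0` where `cosh x = c`, which does not occur for `c < 1`. -/
noncomputable def coshProfile (c x : ℝ) : ℝ := (cosh x - c)⁻¹

section coshProfile

variable {c x : ℝ}

lemma contDiffAt_coshProfile {n : WithTop ℕ∞} (h : cosh x ≠ c) :
    ContDiffAt ℝ n (coshProfile c) x :=
  (contDiff_cosh.contDiffAt.sub contDiffAt_const).inv (sub_ne_zero.2 h)

lemma contDiff_coshProfile {n : WithTop ℕ∞} (hc : c < 1) : ContDiff ℝ n (coshProfile c) :=
  contDiff_iff_contDiffAt.2 fun x ↦ contDiffAt_coshProfile (hc.trans_le (one_le_cosh x)).ne'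

lemma hasDerivAt_coshProfile (h : cosh x ≠ c) :
    HasDerivAt (coshProfile c) (-sinh x * coshProfile c x ^ 2) x := by
  refine (((hasDerivAt_cosh x).sub_const c).fun_inv (sub_ne_zero.2 h)).congr_deriv ?_
  rw [coshProfile, inv_pow, div_eq_mul_inv]

lemma deriv_deriv_coshProfile (h : cosh x ≠ c) :
    deriv (deriv (coshProfile c)) x =
      coshProfile c x + 3 * c * coshProfile c x ^ 2 - 2 * (1 - c ^ 2) * coshProfile c x ^ 3 := by
  have deriv_eq : deriv (coshProfile c) =ᶠ[nhds x] fun y ↦ -sinh y * coshProfile c y ^ 2 :=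
    (continuous_cosh.continuousAt.eventually_ne h).mono fun y hy ↦ (hasDerivAt_coshProfile hy).deriv
  have hasDerivAt_deriv :=
    (hasDerivAt_sinh x).fun_neg.fun_mul ((hasDerivAt_coshProfile h).fun_pow 2)
  have cosh_mul : (cosh x - c) * coshProfile c x = 1 := mul_inv_cancel₀ (sub_ne_zero.2 h)
  rw [deriv_eq.deriv_eq, hasDerivAt_deriv.deriv]
  generalize coshProfile c x = u at cosh_mul ⊢
  linear_combination
    u * (1 + 2 * c * u + 2 * cosh x * u) * cosh_mul + 2 * u ^ 3 * sinh_sq x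

end coshProfile

lemma deriv_deriv_const_mul_comp_mul_left {𝕜 : Type*} [NontriviallyNormedField 𝕜]
    (a k : 𝕜) (f : 𝕜 → 𝕜) (x : 𝕜) :
    deriv (deriv fun y ↦ a * f (k * y)) x = a * k ^ 2 * deriv (deriv f) (k * x) := by
  have deriv_eq : (deriv fun y ↦ a * f (k * y)) = fun y ↦ a * k * deriv f (k * y) := by
    funext y
    rw [deriv_const_mul_field, deriv_comp_mul_left, smul_eq_mul, mul_assoc]
  rw [deriv_eq, deriv_const_mul_field, deriv_comp_mul_left, smul_eq_mul]
  ring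

lemma rescaled_coshProfile_solves_profile_equation {c ε a k ξ : ℝ} (h : cosh (k * ξ) ≠ c)
    (hk : ε * k ^ 2 = 1 - c ^ 2) (ha : ε * a = 2 * (1 - c ^ 2)) :
    -ε * deriv (deriv fun y ↦ a * coshProfile c (k * y)) ξ
      + (1 - c ^ 2) * (a * coshProfile c (k * ξ))
      + (3 / 2) * c * ε * (a * coshProfile c (k * ξ)) ^ 2
      - (ε ^ 2 / 2) * (a * coshProfile c (k * ξ)) ^ 3 = 0 := by
  rw [deriv_deriv_const_mul_comp_mul_left, deriv_deriv_coshProfile h]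
  generalize coshProfile c (k * ξ) = u
  linear_combination -(a * (u + 3 * c * u ^ 2 - 2 * (1 - c ^ 2) * u ^ 3)) * hk +
    (3 / 2 * c * a * u ^ 2 - a * u ^ 3 / 2 * (ε * a + 2 * (1 - c ^ 2))) * ha

/-- For `|c| < 1` and `ε > 0`, the function
`v_{c,ε}(ξ) = 2(1−c²)/(ε[cosh(√(1−c²) ε^{−1/2} ξ) − c])` is a smooth solution of
`−ε φ'' + (1−c²) φ + (3/2) c ε φ² − (ε²/2) φ³ = 0`. -/
theorem stmt_4 (c ε : ℝ) (hc : |c| < 1) (hε : 0 < ε) (v : ℝ → ℝ)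
    (hv : ∀ ξ, v ξ = 2 * (1 - c ^ 2) /
      (ε * (Real.cosh (Real.sqrt (1 - c ^ 2) * ξ / Real.sqrt ε) - c))) :
    ContDiff ℝ (⊤ : ℕ∞) v ∧
    (∀ ξ : ℝ, -ε * deriv (deriv v) ξ + (1 - c ^ 2) * v ξ
      + (3 / 2) * c * ε * (v ξ) ^ 2 - (ε ^ 2 / 2) * (v ξ) ^ 3 = 0) := by
  have hc1 : c < 1 := (abs_lt.1 hc).2
  have hc2 : 0 ≤ 1 - c ^ 2 := sub_nonneg.2 ((sq_lt_one_iff_abs_lt_one c).2 hc).le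
  let a := 2 * (1 - c ^ 2) / ε
  let k := √(1 - c ^ 2) / √ε
  have ha : ε * a = 2 * (1 - c ^ 2) := mul_div_cancel₀ _ hε.ne'
  have hk : ε * k ^ 2 = 1 - c ^ 2 := by
    rw [div_pow, sq_sqrt hc2, sq_sqrt hε.le, mul_div_cancel₀ _ hε.ne']
  have v_eq : v = fun ξ ↦ a * coshProfile c (k * ξ) := by
    funext ξ
    rw [hv, coshProfile, ← div_eq_mul_inv, div_div, div_mul_eq_mul_div]
  subst v_eq
  exact ⟨contDiff_const.mul ((contDiff_coshProfile hc1).comp (contDiff_const.mul contDiff_id)),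
    fun ξ ↦ rescaled_coshProfile_solves_profile_equation
      (hc1.trans_le (one_le_cosh (k * ξ))).ne' hk ha⟩
end

section
/- Let k > 1, β = √(3(k²−1)), v(ξ) = 2(k²−1)/(cosh(βξ) + k), and η(ξ) = v(ξ)(k − v(ξ)/2). Then: (i) v is even and strictly decreasing on (0, ∞), with sup_{ξ∈ℝ} v(ξ) = v(0) = 2(k−1); (ii) if 1 < k ≤ 2, then η is strictly decreasing on (0, ∞) and sup_{ξ∈ℝ} |η(ξ)| = sup_{ξ∈ℝ} |v(ξ)| = 2(k−1). -/
/-!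
Writing `v` for the velocity and `k` for the wave speed, the elevation is `η = q ∘ v` with
`q u = u * (k - u / 2)`, a parabola increasing exactly on `(-∞, k]`. The velocity is an even bump
with range in `(0, 2 * (k - 1)]`, and its peak `2 * (k - 1)` lies in `(-∞, k]` precisely when
`k ≤ 2`; in that case `η` inherits the shape of `v`, and `q (2 * (k - 1)) = 2 * (k - 1)`.
-/

open Set

theorem iSup_eq_apply_of_forall_le {ι α : Type*} [ConditionallyCompleteLattice α] {f : ι → α}
    {i : ι} (h : ∀ j, f j ≤ f i) : ⨆ j, f j = f i :=
  have : Nonempty ι := ⟨i⟩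
  have hgreatest : IsGreatest (range f) (f i) := ⟨mem_range_self i, forall_mem_range.2 h⟩
  hgreatest.isLUB.ciSup_eq

theorem strictAntiOn_div_cosh_mul_add {a b c : ℝ} (ha : 0 < a) (hb : b ≠ 0) (hc : -1 < c) :
    StrictAntiOn (fun x => a / (Real.cosh (b * x) + c)) (Ici 0) := by
  intro x hx y hy hxy
  have hcosh : Real.cosh (b * x) < Real.cosh (b * y) := by
    rw [Real.cosh_lt_cosh, abs_mul, abs_mul, abs_of_nonneg (mem_Ici.1 hx),
      abs_of_nonneg (mem_Ici.1 hy)]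
    exact mul_lt_mul_of_pos_left hxy (abs_pos.2 hb)
  have hden : 0 < Real.cosh (b * x) + c := by linarith [Real.one_le_cosh (b * x)]
  exact div_lt_div_of_pos_left ha hden (by linarith)

/-- The velocity profile of the solitary wave of speed `k`, with the inverse width `β` left free;
the waves of the Kaup–Broer–Kupershmidt system with `a = 1/3` have `β = √(3 * (k ^ 2 - 1))`. -/
noncomputable def solitaryVelocity (k β ξ : ℝ) : ℝ :=
  2 * (k ^ 2 - 1) / (Real.cosh (β * ξ) + k)

/-- The elevation at a point of a wave of speed `k` where the velocity is `u`. -/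
noncomputable def elevationOfVelocity (k u : ℝ) : ℝ :=
  u * (k - u / 2)

/-- The elevation profile of the solitary wave with velocity profile `solitaryVelocity k β`. -/
noncomputable def solitaryElevation (k β ξ : ℝ) : ℝ :=
  elevationOfVelocity k (solitaryVelocity k β ξ)

theorem strictMonoOn_elevationOfVelocity (k : ℝ) :
    StrictMonoOn (elevationOfVelocity k) (Iic k) := by
  intro u _ w hw huw
  have hfactor : elevationOfVelocity k w - elevationOfVelocity k u
      = (w - u) * (k - (u + w) / 2) := by
    unfold elevationOfVelocity
    ring
  have hmid : (u + w) / 2 < k := by linarith [mem_Iic.1 hw]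
  exact sub_pos.1 (hfactor ▸ mul_pos (sub_pos.2 huw) (sub_pos.2 hmid))

theorem elevationOfVelocity_nonneg {k u : ℝ} (hu : 0 ≤ u) (huk : u ≤ 2 * k) :
    0 ≤ elevationOfVelocity k u :=
  mul_nonneg hu (by linarith)

section SolitaryWave

variable {k β : ℝ}

theorem even_solitaryVelocity (k β : ℝ) : Function.Even (solitaryVelocity k β) := fun ξ => by
  simp only [solitaryVelocity, mul_neg, Real.cosh_neg]

theorem solitaryVelocity_zero (hk : k ≠ -1) : solitaryVelocity k β 0 = 2 * (k - 1) := by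
  have hden : 1 + k ≠ 0 := fun h => hk (by linarith)
  rw [solitaryVelocity, mul_zero, Real.cosh_zero, div_eq_iff hden]
  ring

theorem solitaryElevation_zero (hk : k ≠ -1) : solitaryElevation k β 0 = 2 * (k - 1) := by
  rw [solitaryElevation, solitaryVelocity_zero hk, elevationOfVelocity]
  ring

theorem solitaryVelocity_nonneg (hk : 1 ≤ k) (ξ : ℝ) : 0 ≤ solitaryVelocity k β ξ :=
  div_nonneg (by nlinarith) (by linarith [Real.cosh_pos (β * ξ)])

theorem solitaryVelocity_le (hk : 1 ≤ k) (ξ : ℝ) : solitaryVelocity k β ξ ≤ 2 * (k - 1) := by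
  have hcosh : 1 ≤ Real.cosh (β * ξ) := Real.one_le_cosh _
  rw [solitaryVelocity, div_le_iff₀ (by linarith)]
  calc 2 * (k ^ 2 - 1) = 2 * (k - 1) * (1 + k) := by ring
    _ ≤ 2 * (k - 1) * (Real.cosh (β * ξ) + k) := by gcongr

theorem solitaryVelocity_le_apply_zero (hk : 1 ≤ k) (ξ : ℝ) :
    solitaryVelocity k β ξ ≤ solitaryVelocity k β 0 :=
  (solitaryVelocity_le hk ξ).trans_eq (solitaryVelocity_zero (by linarith)).symm

theorem solitaryVelocity_le_speed (hk : 1 ≤ k) (hk2 : k ≤ 2) (ξ : ℝ) :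
    solitaryVelocity k β ξ ≤ k :=
  (solitaryVelocity_le hk ξ).trans (by linarith)

theorem solitaryElevation_nonneg (hk : 1 ≤ k) (ξ : ℝ) : 0 ≤ solitaryElevation k β ξ :=
  elevationOfVelocity_nonneg (solitaryVelocity_nonneg hk ξ)
    ((solitaryVelocity_le hk ξ).trans (by linarith))

theorem solitaryElevation_le_apply_zero (hk : 1 ≤ k) (hk2 : k ≤ 2) (ξ : ℝ) :
    solitaryElevation k β ξ ≤ solitaryElevation k β 0 :=
  (strictMonoOn_elevationOfVelocity k).monotoneOn (solitaryVelocity_le_speed hk hk2 ξ)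
    (solitaryVelocity_le_speed hk hk2 0) (solitaryVelocity_le_apply_zero hk ξ)

theorem strictAntiOn_solitaryVelocity (hk : 1 < k) (hβ : β ≠ 0) :
    StrictAntiOn (solitaryVelocity k β) (Ici 0) :=
  strictAntiOn_div_cosh_mul_add (by nlinarith) hβ (by linarith)

theorem strictAntiOn_solitaryElevation (hk : 1 < k) (hk2 : k ≤ 2) (hβ : β ≠ 0) :
    StrictAntiOn (solitaryElevation k β) (Ici 0) :=
  (strictMonoOn_elevationOfVelocity k).comp_strictAntiOn (strictAntiOn_solitaryVelocity hk hβ)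
    fun ξ _ => solitaryVelocity_le_speed hk.le hk2 ξ

theorem iSup_solitaryVelocity (hk : 1 ≤ k) :
    ⨆ ξ, solitaryVelocity k β ξ = solitaryVelocity k β 0 :=
  iSup_eq_apply_of_forall_le (solitaryVelocity_le_apply_zero hk)

theorem iSup_abs_solitaryVelocity (hk : 1 ≤ k) :
    ⨆ ξ, |solitaryVelocity k β ξ| = 2 * (k - 1) := by
  simp only [abs_of_nonneg (solitaryVelocity_nonneg hk _)]
  rw [iSup_solitaryVelocity hk, solitaryVelocity_zero (by linarith)]

theorem iSup_abs_solitaryElevation (hk : 1 ≤ k) (hk2 : k ≤ 2) :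
    ⨆ ξ, |solitaryElevation k β ξ| = 2 * (k - 1) := by
  simp only [abs_of_nonneg (solitaryElevation_nonneg hk _)]
  rw [iSup_eq_apply_of_forall_le (solitaryElevation_le_apply_zero hk hk2),
    solitaryElevation_zero (by linarith)]

end SolitaryWave

/-- Monotonicity and supremum properties of the bad-KBK solitary wave profiles:
`v` is even, strictly decreasing on `(0,∞)` with supremum `v(0) = 2(k−1)`, and for
`1 < k ≤ 2` the elevation `η = v(k − v/2)` is strictly decreasing on `(0,∞)` with
`sup |η| = sup |v| = 2(k−1)`. -/
theorem stmt_7 (k β : ℝ) (hk : 1 < k) (hβ : β = Real.sqrt (3 * (k ^ 2 - 1)))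
    (v η : ℝ → ℝ)
    (hv : ∀ ξ, v ξ = 2 * (k ^ 2 - 1) / (Real.cosh (β * ξ) + k))
    (hη : ∀ ξ, η ξ = v ξ * (k - v ξ / 2)) :
    ((∀ ξ, v (-ξ) = v ξ) ∧ StrictAntiOn v (Set.Ioi (0 : ℝ)) ∧
      (⨆ ξ : ℝ, v ξ) = v 0 ∧ v 0 = 2 * (k - 1)) ∧
    (k ≤ 2 → StrictAntiOn η (Set.Ioi (0 : ℝ)) ∧
      (⨆ ξ : ℝ, |η ξ|) = 2 * (k - 1) ∧ (⨆ ξ : ℝ, |v ξ|) = 2 * (k - 1)) := by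
  obtain rfl : v = solitaryVelocity k β := funext hv
  obtain rfl : η = solitaryElevation k β := funext hη
  have hβ0 : β ≠ 0 := hβ ▸ (Real.sqrt_pos.2 (by nlinarith)).ne'
  have hv_anti := (strictAntiOn_solitaryVelocity hk hβ0).mono Ioi_subset_Ici_self
  refine ⟨⟨even_solitaryVelocity k β, hv_anti, iSup_solitaryVelocity hk.le,
    solitaryVelocity_zero (by linarith)⟩, fun hk2 => ?_⟩
  have hη_anti := (strictAntiOn_solitaryElevation hk hk2 hβ0).mono Ioi_subset_Ici_self
  exact ⟨hη_anti, iSup_abs_solitaryElevation hk.le hk2, iSup_abs_solitaryVelocity hk.le⟩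
end

section
/- Let k > 2, β = √(3(k²−1)), v(ξ) = 2(k²−1)/(cosh(βξ) + k), and η(ξ) = v(ξ)(k − v(ξ)/2). Then sup_{ξ∈ℝ} η(ξ) = k²/2 > 2(k−1) = η(0), and in particular η is not monotone on (0, ∞): there exists ξ₀ > 0 with η(ξ₀) > η(0). -/
/-!
Completing the square, `η = k² / 2 - (v - k)² / 2`, so `η ≤ k² / 2` with equality exactly where
`v = k`. The velocity takes every value strictly between `0` and its crest value `2 (k - 1)`, and
`k` is such a value as soon as `k > 2`; at the crest itself `η` misses the bound by `(k - 2)² / 2`.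
-/

namespace SolitaryWave

/-- The velocity profile `v` of the solitary wave of speed `k`. The inverse width `β` is a free
parameter; the travelling-wave solution has `β = √(3 (k² - 1))`. -/
noncomputable def velocity (k β ξ : ℝ) : ℝ :=
  2 * (k ^ 2 - 1) / (Real.cosh (β * ξ) + k)

/-- The elevation profile `η = v (k - v / 2)` of the solitary wave of speed `k` and inverse
width `β`. -/
noncomputable def elevation (k β ξ : ℝ) : ℝ :=
  velocity k β ξ * (k - velocity k β ξ / 2)

variable {k β : ℝ}

lemma velocity_zero (hk : k ≠ -1) : velocity k β 0 = 2 * (k - 1) := by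
  have hk' : 1 + k ≠ 0 := by contrapose! hk; linarith
  rw [velocity, mul_zero, Real.cosh_zero, div_eq_iff hk']
  ring

lemma elevation_zero (hk : k ≠ -1) : elevation k β 0 = 2 * (k - 1) := by
  rw [elevation, velocity_zero hk]
  ring

lemma exists_pos_cosh_mul_eq (hβ : β ≠ 0) {c : ℝ} (hc : 1 < c) :
    ∃ ξ > 0, Real.cosh (β * ξ) = c := by
  refine ⟨Real.arcosh c / |β|, div_pos (Real.arcosh_pos hc) (abs_pos.mpr hβ), ?_⟩
  rw [← Real.cosh_abs, abs_mul, abs_div, abs_abs, mul_div_cancel₀ _ (abs_ne_zero.mpr hβ),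
    Real.cosh_abs, Real.cosh_arcosh hc.le]

lemma exists_pos_velocity_eq (hβ : β ≠ 0) {u : ℝ} (hu_pos : 0 < u) (hu_lt : u < 2 * (k - 1)) :
    ∃ ξ > 0, velocity k β ξ = u := by
  have hk : 0 < k + 1 := by linarith
  have one_lt : 1 < 2 * (k ^ 2 - 1) / u - k := by
    rw [lt_sub_iff_add_lt, lt_div_iff₀ hu_pos]
    calc (1 + k) * u = (k + 1) * u := by ring
      _ < (k + 1) * (2 * (k - 1)) := by gcongr
      _ = 2 * (k ^ 2 - 1) := by ring
  obtain ⟨ξ, hξ, hcosh⟩ := exists_pos_cosh_mul_eq hβ one_lt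
  have amplitude_ne_zero : 2 * (k ^ 2 - 1) ≠ 0 := by nlinarith
  exact ⟨ξ, hξ, by rw [velocity, hcosh, sub_add_cancel, div_div_cancel₀ amplitude_ne_zero]⟩

lemma elevation_eq_sub_sq (k β ξ : ℝ) :
    elevation k β ξ = k ^ 2 / 2 - (velocity k β ξ - k) ^ 2 / 2 := by
  rw [elevation]
  ring

lemma elevation_le (k β ξ : ℝ) : elevation k β ξ ≤ k ^ 2 / 2 := by
  rw [elevation_eq_sub_sq]
  exact sub_le_self _ (by positivity)

lemma exists_pos_elevation_eq (hk : 2 < k) (hβ : β ≠ 0) :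
    ∃ ξ > 0, elevation k β ξ = k ^ 2 / 2 := by
  obtain ⟨ξ, hξ, hv⟩ := exists_pos_velocity_eq (u := k) hβ (by linarith) (by linarith)
  exact ⟨ξ, hξ, by simp [elevation_eq_sub_sq, hv]⟩

lemma isGreatest_range_elevation (hk : 2 < k) (hβ : β ≠ 0) :
    IsGreatest (Set.range (elevation k β)) (k ^ 2 / 2) := by
  obtain ⟨ξ, -, hξ⟩ := exists_pos_elevation_eq hk hβ
  exact ⟨⟨ξ, hξ⟩, Set.forall_mem_range.mpr (elevation_le k β)⟩

lemma two_mul_sub_one_lt_sq_div_two (hk : k ≠ 2) : 2 * (k - 1) < k ^ 2 / 2 := by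
  have : 0 < (k - 2) ^ 2 := sq_pos_of_ne_zero (sub_ne_zero.mpr hk)
  linarith

end SolitaryWave

open SolitaryWave

/-- For `k > 2`, the elevation profile `η = v(k − v/2)` of the bad-KBK solitary wave satisfies
`sup η = k²/2 > 2(k−1) = η(0)`, and in particular `η` is not monotone on `(0,∞)`:
there is `ξ₀ > 0` with `η(ξ₀) > η(0)`. -/
theorem stmt_8 (k β : ℝ) (hk : 2 < k) (hβ : β = Real.sqrt (3 * (k ^ 2 - 1)))
    (v η : ℝ → ℝ)
    (hv : ∀ ξ, v ξ = 2 * (k ^ 2 - 1) / (Real.cosh (β * ξ) + k))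
    (hη : ∀ ξ, η ξ = v ξ * (k - v ξ / 2)) :
    (⨆ ξ : ℝ, η ξ) = k ^ 2 / 2 ∧
    k ^ 2 / 2 > 2 * (k - 1) ∧
    η 0 = 2 * (k - 1) ∧
    ∃ ξ₀ > (0 : ℝ), η ξ₀ > η 0 := by
  obtain rfl : v = velocity k β := funext hv
  obtain rfl : η = elevation k β := funext hη
  have hβ₀ : β ≠ 0 := by
    rw [hβ]
    exact (Real.sqrt_pos.mpr (by nlinarith)).ne'
  have crest : elevation k β 0 = 2 * (k - 1) := elevation_zero (by linarith)
  have crest_lt : 2 * (k - 1) < k ^ 2 / 2 := two_mul_sub_one_lt_sq_div_two hk.ne'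
  obtain ⟨ξ₀, hξ₀, hmax⟩ := exists_pos_elevation_eq hk hβ₀
  refine ⟨(isGreatest_range_elevation hk hβ₀).csSup_eq, crest_lt, crest, ξ₀, hξ₀, ?_⟩
  rwa [hmax, crest]
end

section
/- Let (η, v) be a smooth real solution on ℝ×ℝ of the 'bad' Kaup–Broer–Kupershmidt system ∂_t η + ∂_x v + ∂_x(η v) + ∂_x³ v = 0, ∂_t v + ∂_x η + v ∂_x v = 0, and define h := η + ∂_x v. Then (h, v) is a smooth solution of the system ∂_t h + ∂_x v + ∂_x² h + ∂_x(v h) = 0, ∂_t v + ∂_x h − ∂_x² v + v ∂_x v = 0. -/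
/-!
The two systems have the same second equation, since `∂ₓ h = ∂ₓ η + ∂ₓ² v`. For the first one,
`∂ₜ h = ∂ₜ η + ∂ₓ ∂ₜ v` by symmetry of second derivatives, and `v h = η v + v ∂ₓ v`, so that
`∂ₜ h + ∂ₓ v + ∂ₓ² h + ∂ₓ (v h)` equals
`(∂ₜ η + ∂ₓ v + ∂ₓ (η v) + ∂ₓ³ v) + ∂ₓ (∂ₜ v + ∂ₓ η + v ∂ₓ v)`.
Hence the two systems are equivalent.
-/

open Function

namespace KaupBroerKupershmidt

section FDeriv

variable {𝕜 E F : Type*} [NontriviallyNormedField 𝕜] [NormedAddCommGroup E] [NormedSpace 𝕜 E]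
  [NormedAddCommGroup F] [NormedSpace 𝕜 F]

lemma fderiv_fderiv_apply_comm {f : E → F} {p : E} {n : WithTop ℕ∞} (hf : ContDiffAt 𝕜 n f p)
    (hn : minSmoothness 𝕜 2 ≤ n) (u w : E) :
    fderiv 𝕜 (fun q => fderiv 𝕜 f q u) p w = fderiv 𝕜 (fun q => fderiv 𝕜 f q w) p u := by
  have hdf : DifferentiableAt 𝕜 (fderiv 𝕜 f) p :=
    (hf.fderiv_right (m := 1) (le_minSmoothness.trans hn)).differentiableAt one_ne_zero
  have fderiv_apply_const (a b : E) :
      fderiv 𝕜 (fun q => fderiv 𝕜 f q a) p b = fderiv 𝕜 (fderiv 𝕜 f) p b a := by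
    rw [fderiv_clm_apply hdf (differentiableAt_const a)]
    simp
  rw [fderiv_apply_const, fderiv_apply_const]
  exact hf.isSymmSndFDerivAt hn w u

end FDeriv

variable {𝕜 F : Type*} [NontriviallyNormedField 𝕜] [NormedAddCommGroup F] [NormedSpace 𝕜 F]

/-- The partial derivative `∂ₓ f` of a function `f x t` of space and time. Like `deriv`, it is `0`
wherever the function `y ↦ f y t` is not differentiable. -/
noncomputable def partialFst (f : 𝕜 → 𝕜 → F) (x t : 𝕜) : F := deriv (fun y => f y t) x

/-- The partial derivative `∂ₜ f` of a function `f x t` of space and time. Like `deriv`, it is `0`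
wherever the function `s ↦ f x s` is not differentiable. -/
noncomputable def partialSnd (f : 𝕜 → 𝕜 → F) (x t : 𝕜) : F := deriv (fun s => f x s) t

local notation "∂ₓ" => partialFst
local notation "∂ₜ" => partialSnd

variable {f g : 𝕜 → 𝕜 → F} {m n : WithTop ℕ∞}

lemma partialFst_iterate_apply (k : ℕ) (f : 𝕜 → 𝕜 → F) (x t : 𝕜) :
    ∂ₓ^[k] f x t = iteratedDeriv k (fun y => f y t) x := by
  induction k generalizing x with
  | zero => simp
  | succ k ih =>
    rw [iterate_succ_apply', iteratedDeriv_succ]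
    exact congrArg (deriv · x) (funext ih)

lemma partialFst_eq_fderiv {x t : 𝕜} (hf : DifferentiableAt 𝕜 (uncurry f) (x, t)) :
    ∂ₓ f x t = fderiv 𝕜 (uncurry f) (x, t) (1, 0) :=
  have slice : HasDerivAt (fun y => (y, t)) ((1 : 𝕜), (0 : 𝕜)) x :=
    (hasDerivAt_id x).prodMk (hasDerivAt_const x t)
  (HasFDerivAt.comp_hasDerivAt (l := uncurry f) x hf.hasFDerivAt slice).deriv

lemma partialSnd_eq_fderiv {x t : 𝕜} (hf : DifferentiableAt 𝕜 (uncurry f) (x, t)) :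
    ∂ₜ f x t = fderiv 𝕜 (uncurry f) (x, t) (0, 1) :=
  have slice : HasDerivAt (fun s => (x, s)) ((0 : 𝕜), (1 : 𝕜)) t :=
    (hasDerivAt_const t x).prodMk (hasDerivAt_id t)
  (HasFDerivAt.comp_hasDerivAt (l := uncurry f) t hf.hasFDerivAt slice).deriv

lemma uncurry_partialFst (hf : Differentiable 𝕜 (uncurry f)) :
    uncurry (∂ₓ f) = fun p => fderiv 𝕜 (uncurry f) p (1, 0) :=
  funext fun p => partialFst_eq_fderiv (hf p)

lemma uncurry_partialSnd (hf : Differentiable 𝕜 (uncurry f)) :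
    uncurry (∂ₜ f) = fun p => fderiv 𝕜 (uncurry f) p (0, 1) :=
  funext fun p => partialSnd_eq_fderiv (hf p)

lemma contDiff_partialFst (hf : ContDiff 𝕜 n (uncurry f)) (hmn : m + 1 ≤ n) :
    ContDiff 𝕜 m (uncurry (∂ₓ f)) := by
  rw [uncurry_partialFst ((hf.of_le (le_add_self.trans hmn)).differentiable one_ne_zero)]
  exact (hf.fderiv_right hmn).clm_apply contDiff_const

lemma contDiff_partialSnd (hf : ContDiff 𝕜 n (uncurry f)) (hmn : m + 1 ≤ n) :
    ContDiff 𝕜 m (uncurry (∂ₜ f)) := by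
  rw [uncurry_partialSnd ((hf.of_le (le_add_self.trans hmn)).differentiable one_ne_zero)]
  exact (hf.fderiv_right hmn).clm_apply contDiff_const

lemma partialFst_add (hf : Differentiable 𝕜 (uncurry f)) (hg : Differentiable 𝕜 (uncurry g)) :
    ∂ₓ (f + g) = ∂ₓ f + ∂ₓ g := by
  funext x t
  have slice : Differentiable 𝕜 fun y : 𝕜 => (y, t) := by fun_prop
  exact deriv_fun_add (hf.comp slice x) (hg.comp slice x)

lemma partialSnd_add (hf : Differentiable 𝕜 (uncurry f)) (hg : Differentiable 𝕜 (uncurry g)) :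
    ∂ₜ (f + g) = ∂ₜ f + ∂ₜ g := by
  funext x t
  have slice : Differentiable 𝕜 fun s : 𝕜 => (x, s) := by fun_prop
  exact deriv_fun_add (hf.comp slice t) (hg.comp slice t)

lemma partialSnd_partialFst_comm (hf : ContDiff 𝕜 n (uncurry f)) (hn : minSmoothness 𝕜 2 ≤ n) :
    ∂ₜ (∂ₓ f) = ∂ₓ (∂ₜ f) := by
  have two_le : (1 : WithTop ℕ∞) + 1 ≤ n := le_minSmoothness.trans hn
  have hd : Differentiable 𝕜 (uncurry f) :=
    (hf.of_le (le_add_self.trans two_le)).differentiable one_ne_zero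
  funext x t
  rw [partialSnd_eq_fderiv ((contDiff_partialFst hf two_le).differentiable one_ne_zero _),
    partialFst_eq_fderiv ((contDiff_partialSnd hf two_le).differentiable one_ne_zero _),
    uncurry_partialFst hd, uncurry_partialSnd hd]
  exact fderiv_fderiv_apply_comm hf.contDiffAt hn (1, 0) (0, 1)

variable {A : Type*} [NormedCommRing A] [NormedAlgebra 𝕜 A] {η v h : 𝕜 → 𝕜 → A}

/-- The bad Kaup–Broer–Kupershmidt system for the surface elevation `η` and the velocity `v`,
as two identities between functions of space and time. Regularity is not part of the definition. -/
structure IsBadKBKSolution (η v : 𝕜 → 𝕜 → A) : Prop where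
  mass : ∂ₜ η + ∂ₓ v + ∂ₓ (η * v) + ∂ₓ^[3] v = 0
  momentum : ∂ₜ v + ∂ₓ η + v * ∂ₓ v = 0

/-- The system coupling a backward heat equation for `h` to a heat equation for `v`,
as two identities between functions of space and time. Regularity is not part of the definition. -/
structure IsHeatKBKSolution (h v : 𝕜 → 𝕜 → A) : Prop where
  mass : ∂ₜ h + ∂ₓ v + ∂ₓ^[2] h + ∂ₓ (v * h) = 0
  momentum : ∂ₜ v + ∂ₓ h - ∂ₓ^[2] v + v * ∂ₓ v = 0

lemma isBadKBKSolution_iff :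
    IsBadKBKSolution η v ↔
      (∀ x t, deriv (fun s => η x s) t + deriv (fun y => v y t) x
        + deriv (fun y => η y t * v y t) x + iteratedDeriv 3 (fun y => v y t) x = 0) ∧
      (∀ x t, deriv (fun s => v x s) t + deriv (fun y => η y t) x
        + v x t * deriv (fun y => v y t) x = 0) := by
  simp only [← partialFst_iterate_apply]
  exact ⟨fun H => ⟨congrFun₂ H.mass, congrFun₂ H.momentum⟩,
    fun H => ⟨funext₂ H.1, funext₂ H.2⟩⟩

lemma isHeatKBKSolution_iff :
    IsHeatKBKSolution h v ↔
      (∀ x t, deriv (fun s => h x s) t + deriv (fun y => v y t) x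
        + iteratedDeriv 2 (fun y => h y t) x + deriv (fun y => v y t * h y t) x = 0) ∧
      (∀ x t, deriv (fun s => v x s) t + deriv (fun y => h y t) x
        - iteratedDeriv 2 (fun y => v y t) x + v x t * deriv (fun y => v y t) x = 0) := by
  simp only [← partialFst_iterate_apply]
  exact ⟨fun H => ⟨congrFun₂ H.mass, congrFun₂ H.momentum⟩,
    fun H => ⟨funext₂ H.1, funext₂ H.2⟩⟩

lemma heat_momentum_eq_bad_momentum (hη : Differentiable 𝕜 (uncurry η))
    (hvx : Differentiable 𝕜 (uncurry (∂ₓ v))) :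
    ∂ₜ v + ∂ₓ (η + ∂ₓ v) - ∂ₓ^[2] v + v * ∂ₓ v = ∂ₜ v + ∂ₓ η + v * ∂ₓ v := by
  rw [partialFst_add hη hvx]
  simp only [iterate_succ, iterate_zero, comp_apply, id]
  ring

lemma heat_mass_eq_bad_mass_add_partialFst_bad_momentum (hη : ContDiff 𝕜 n (uncurry η))
    (hv : ContDiff 𝕜 (n + 1) (uncurry v)) (hn : minSmoothness 𝕜 2 ≤ n) :
    ∂ₜ (η + ∂ₓ v) + ∂ₓ v + ∂ₓ^[2] (η + ∂ₓ v) + ∂ₓ (v * (η + ∂ₓ v)) =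
      (∂ₜ η + ∂ₓ v + ∂ₓ (η * v) + ∂ₓ^[3] v) + ∂ₓ (∂ₜ v + ∂ₓ η + v * ∂ₓ v) := by
  have two_le : 1 + 1 ≤ n := le_minSmoothness.trans hn
  have ne_zero : n ≠ 0 := (one_pos.trans_le (le_add_self.trans two_le)).ne'
  have hvx : ContDiff 𝕜 n (uncurry (∂ₓ v)) := contDiff_partialFst hv le_rfl
  have dη : Differentiable 𝕜 (uncurry η) := hη.differentiable ne_zero
  have dv : Differentiable 𝕜 (uncurry v) := (hv.of_le le_self_add).differentiable ne_zero
  have dvx : Differentiable 𝕜 (uncurry (∂ₓ v)) := hvx.differentiable ne_zero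
  have dvt : Differentiable 𝕜 (uncurry (∂ₜ v)) :=
    (contDiff_partialSnd hv le_rfl).differentiable ne_zero
  have dηx : Differentiable 𝕜 (uncurry (∂ₓ η)) :=
    (contDiff_partialFst hη two_le).differentiable one_ne_zero
  have dvxx : Differentiable 𝕜 (uncurry (∂ₓ (∂ₓ v))) :=
    (contDiff_partialFst hvx two_le).differentiable one_ne_zero
  have time_deriv : ∂ₜ (η + ∂ₓ v) = ∂ₜ η + ∂ₓ (∂ₜ v) := by
    rw [partialSnd_add dη dvx, partialSnd_partialFst_comm hv (hn.trans le_self_add)]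
  have diffusion : ∂ₓ^[2] (η + ∂ₓ v) = ∂ₓ (∂ₓ η) + ∂ₓ^[3] v := by
    simp only [iterate_succ, iterate_zero, comp_apply, id, partialFst_add dη dvx,
      partialFst_add dηx dvxx]
  have transport : ∂ₓ (v * (η + ∂ₓ v)) = ∂ₓ (η * v) + ∂ₓ (v * ∂ₓ v) := by
    rw [mul_add, mul_comm v η, partialFst_add (dη.mul dv) (dv.mul dvx)]
  have momentum_deriv :
      ∂ₓ (∂ₜ v + ∂ₓ η + v * ∂ₓ v) = ∂ₓ (∂ₜ v) + ∂ₓ (∂ₓ η) + ∂ₓ (v * ∂ₓ v) := by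
    rw [partialFst_add (dvt.add dηx) (dv.mul dvx), partialFst_add dvt dηx]
  rw [time_deriv, diffusion, transport, momentum_deriv]
  ring

theorem isBadKBKSolution_iff_isHeatKBKSolution (hη : ContDiff 𝕜 n (uncurry η))
    (hv : ContDiff 𝕜 (n + 1) (uncurry v)) (hn : minSmoothness 𝕜 2 ≤ n) :
    IsBadKBKSolution η v ↔ IsHeatKBKSolution (η + ∂ₓ v) v := by
  have ne_zero : n ≠ 0 := (two_pos.trans_le (le_minSmoothness.trans hn)).ne'
  have momentum_eq := heat_momentum_eq_bad_momentum (hη.differentiable ne_zero)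
    ((contDiff_partialFst hv le_rfl).differentiable ne_zero)
  have mass_eq := heat_mass_eq_bad_mass_add_partialFst_bad_momentum hη hv hn
  have partialFst_zero : ∂ₓ (0 : 𝕜 → 𝕜 → A) = 0 :=
    funext₂ fun x _ => deriv_const x 0
  constructor
  · rintro ⟨mass, momentum⟩
    exact ⟨by rw [mass_eq, mass, momentum, partialFst_zero, add_zero],
      momentum_eq.trans momentum⟩
  · rintro ⟨mass, momentum⟩
    rw [momentum_eq] at momentum
    rw [mass_eq, momentum, partialFst_zero, add_zero] at mass
    exact ⟨mass, momentum⟩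

end KaupBroerKupershmidt

open KaupBroerKupershmidt

theorem stmt_12_general {𝕜 A : Type*} [NontriviallyNormedField 𝕜] [NormedCommRing A]
    [NormedAlgebra 𝕜 A] {n : WithTop ℕ∞} (hn : minSmoothness 𝕜 2 ≤ n) {η v h : 𝕜 → 𝕜 → A}
    (hη : ContDiff 𝕜 n (uncurry η)) (hv : ContDiff 𝕜 (n + 1) (uncurry v))
    (hh : h = η + partialFst v) :
    ContDiff 𝕜 n (uncurry h) ∧ (IsBadKBKSolution η v ↔ IsHeatKBKSolution h v) := by
  subst hh
  exact ⟨hη.add (contDiff_partialFst hv le_rfl),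
    isBadKBKSolution_iff_isHeatKBKSolution hη hv hn⟩

/-- The change of variable `h = η + ∂_x v` transforms smooth solutions of the bad KBK system
into solutions of `∂_t h + ∂_x v + ∂_x² h + ∂_x(vh) = 0`, `∂_t v + ∂_x h − ∂_x² v + v∂_x v = 0`. -/
theorem stmt_12 (η v : ℝ → ℝ → ℝ)
    (hη : ContDiff ℝ (⊤ : ℕ∞) (fun p : ℝ × ℝ => η p.1 p.2))
    (hv : ContDiff ℝ (⊤ : ℕ∞) (fun p : ℝ × ℝ => v p.1 p.2))
    (heq1 : ∀ x t : ℝ,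
      deriv (fun s => η x s) t + deriv (fun y => v y t) x
        + deriv (fun y => η y t * v y t) x + iteratedDeriv 3 (fun y => v y t) x = 0)
    (heq2 : ∀ x t : ℝ,
      deriv (fun s => v x s) t + deriv (fun y => η y t) x
        + v x t * deriv (fun y => v y t) x = 0)
    (h : ℝ → ℝ → ℝ)
    (hh : ∀ x t : ℝ, h x t = η x t + deriv (fun y => v y t) x) :
    ContDiff ℝ (⊤ : ℕ∞) (fun p : ℝ × ℝ => h p.1 p.2) ∧
    (∀ x t : ℝ,
      deriv (fun s => h x s) t + deriv (fun y => v y t) x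
        + iteratedDeriv 2 (fun y => h y t) x + deriv (fun y => v y t * h y t) x = 0) ∧
    (∀ x t : ℝ,
      deriv (fun s => v x s) t + deriv (fun y => h y t) x
        - iteratedDeriv 2 (fun y => v y t) x + v x t * deriv (fun y => v y t) x = 0) := by
  have hn : minSmoothness ℝ 2 ≤ (⊤ : ℕ∞) := by
    rw [minSmoothness_of_isRCLikeNormedField]
    exact WithTop.coe_le_coe.2 (le_top : (2 : ℕ∞) ≤ ⊤)
  obtain ⟨h_smooth, h_iff⟩ := stmt_12_general hn hη hv (funext₂ hh)
  exact ⟨h_smooth, isHeatKBKSolution_iff.1 (h_iff.1 (isBadKBKSolution_iff.2 ⟨heq1, heq2⟩))⟩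
end

section
/- Let (η, v) be a smooth real solution on ℝ×ℝ of the good Kaup–Broer–Kupershmidt system ∂_t η + ∂_x v + ∂_x(η v) − ∂_x³ v = 0, ∂_t v + ∂_x η + v ∂_x v = 0, and define the complex-valued function h := η − i ∂_x v. Then (h, v) satisfies the Schrödinger-like system ∂_t h + ∂_x v − i ∂_x² h + ∂_x(v h) = 0, ∂_t v + ∂_x h + i ∂_x² v + v ∂_x v = 0. -/
/-!
For `h = η - c ∂_x v` with `c² = κ`, the left-hand side of the first transformed equation is that of
the mass equation minus `c` times the `x`-derivative of that of the momentum equation, because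
`∂_t ∂_x v = ∂_x ∂_t v` and the second derivative of `c ∂_x v`, multiplied by `c`, is the dispersive
term `κ ∂_x³ v`. The second transformed equation is the momentum equation rewritten in terms of `h`.
The computation takes place in a commutative algebra containing `c`, so real solutions are first
viewed as complex ones; the good system is the case `κ = -1`, `c = i`.
-/

section PartialDerivatives

variable {𝕜 E : Type*} [NontriviallyNormedField 𝕜] [NormedAddCommGroup E] [NormedSpace 𝕜 E]
  {f : 𝕜 → 𝕜 → E} {m n : WithTop ℕ∞}

theorem deriv_slice_fst {x t : 𝕜} (hf : DifferentiableAt 𝕜 (fun p : 𝕜 × 𝕜 => f p.1 p.2) (x, t)) :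
    deriv (fun y => f y t) x = fderiv 𝕜 (fun p : 𝕜 × 𝕜 => f p.1 p.2) (x, t) (1, 0) :=
  (hf.hasFDerivAt.comp_hasDerivAt (f := fun y => (y, t)) x
    ((hasDerivAt_id' x).prodMk (hasDerivAt_const x t))).deriv

theorem deriv_slice_snd {x t : 𝕜} (hf : DifferentiableAt 𝕜 (fun p : 𝕜 × 𝕜 => f p.1 p.2) (x, t)) :
    deriv (fun s => f x s) t = fderiv 𝕜 (fun p : 𝕜 × 𝕜 => f p.1 p.2) (x, t) (0, 1) :=
  (hf.hasFDerivAt.comp_hasDerivAt (f := fun s => (x, s)) t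
    ((hasDerivAt_const t x).prodMk (hasDerivAt_id' t))).deriv

theorem contDiff_slice_fst (hf : ContDiff 𝕜 n (fun p : 𝕜 × 𝕜 => f p.1 p.2)) (t : 𝕜) :
    ContDiff 𝕜 n (fun y => f y t) :=
  hf.comp (contDiff_prodMk_left t)

theorem contDiff_slice_snd (hf : ContDiff 𝕜 n (fun p : 𝕜 × 𝕜 => f p.1 p.2)) (x : 𝕜) :
    ContDiff 𝕜 n (fun s => f x s) :=
  hf.comp (contDiff_prodMk_right x)

theorem contDiff_deriv_fst (hf : ContDiff 𝕜 n (fun p : 𝕜 × 𝕜 => f p.1 p.2)) (hmn : m + 1 ≤ n) :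
    ContDiff 𝕜 m (fun p : 𝕜 × 𝕜 => deriv (fun y => f y p.2) p.1) := by
  have hdiff := hf.differentiable (by rintro rfl; simp at hmn)
  simp only [fun p : 𝕜 × 𝕜 => deriv_slice_fst (hdiff p)]
  exact (hf.fderiv_right hmn).clm_apply contDiff_const

theorem contDiff_deriv_snd (hf : ContDiff 𝕜 n (fun p : 𝕜 × 𝕜 => f p.1 p.2)) (hmn : m + 1 ≤ n) :
    ContDiff 𝕜 m (fun p : 𝕜 × 𝕜 => deriv (fun s => f p.1 s) p.2) := by
  have hdiff := hf.differentiable (by rintro rfl; simp at hmn)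
  simp only [fun p : 𝕜 × 𝕜 => deriv_slice_snd (hdiff p)]
  exact (hf.fderiv_right hmn).clm_apply contDiff_const

theorem deriv_deriv_comm (hf : ContDiff 𝕜 n (fun p : 𝕜 × 𝕜 => f p.1 p.2))
    (hn : minSmoothness 𝕜 2 ≤ n) (x t : 𝕜) :
    deriv (fun s => deriv (fun y => f y s) x) t = deriv (fun y => deriv (fun s => f y s) t) x := by
  have two_le : 2 ≤ n := le_minSmoothness.trans hn
  set F : 𝕜 × 𝕜 → E := fun p => f p.1 p.2
  have hF : Differentiable 𝕜 F := hf.differentiable (by rintro rfl; simp at two_le)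
  have hF' : Differentiable 𝕜 (fderiv 𝕜 F) :=
    (hf.fderiv_right (m := 1) two_le).differentiable one_ne_zero
  have fderiv_apply (q w z : 𝕜 × 𝕜) :
      fderiv 𝕜 (fun p => fderiv 𝕜 F p w) q z = fderiv 𝕜 (fderiv 𝕜 F) q z w := by
    simp [fderiv_clm_apply (hF' q) (differentiableAt_const w)]
  have differentiable_apply (w : 𝕜 × 𝕜) : Differentiable 𝕜 (fun p => fderiv 𝕜 F p w) :=
    hF'.clm_apply (differentiable_const w)
  calc
    deriv (fun s => deriv (fun y => f y s) x) t = deriv (fun s => fderiv 𝕜 F (x, s) (1, 0)) t := by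
      simp only [fun s => deriv_slice_fst (hF (x, s)), F]
    _ = fderiv 𝕜 (fderiv 𝕜 F) (x, t) (0, 1) (1, 0) :=
      (deriv_slice_snd (f := fun y s => fderiv 𝕜 F (y, s) (1, 0))
        (differentiable_apply (1, 0) (x, t))).trans (fderiv_apply ..)
    _ = fderiv 𝕜 (fderiv 𝕜 F) (x, t) (1, 0) (0, 1) := hf.contDiffAt.isSymmSndFDerivAt hn _ _
    _ = deriv (fun y => fderiv 𝕜 F (y, t) (0, 1)) x :=
      ((deriv_slice_fst (f := fun y s => fderiv 𝕜 F (y, s) (0, 1))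
        (differentiable_apply (0, 1) (x, t))).trans (fderiv_apply ..)).symm
    _ = deriv (fun y => deriv (fun s => f y s) t) x := by
      simp only [fun y => deriv_slice_snd (hF (y, t)), F]

end PartialDerivatives

section CompContinuousLinearMap

variable {𝕜 E F : Type*} [NontriviallyNormedField 𝕜] [NormedAddCommGroup E] [NormedSpace 𝕜 E]
  [NormedAddCommGroup F] [NormedSpace 𝕜 F] {f : 𝕜 → E} {x : 𝕜}

theorem iteratedDeriv_clm_comp_left {n : ℕ} (L : E →L[𝕜] F) (hf : ContDiffAt 𝕜 n f x) :
    iteratedDeriv n (fun y => L (f y)) x = L (iteratedDeriv n f x) := by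
  simp only [iteratedDeriv_eq_iteratedFDeriv]
  exact congrArg (· fun _ => 1) (L.iteratedFDeriv_comp_left hf le_rfl)

theorem deriv_clm_comp_left (L : E →L[𝕜] F) (hf : DifferentiableAt 𝕜 f x) :
    deriv (fun y => L (f y)) x = L (deriv f x) :=
  (L.hasFDerivAt.comp_hasDerivAt x hf.hasDerivAt).deriv

end CompContinuousLinearMap

/-- Classical solutions `(η, v)` of the Kaup–Broer–Kupershmidt system
`∂_t η + ∂_x v + ∂_x(η v) + κ ∂_x³ v = 0`, `∂_t v + ∂_x η + v ∂_x v = 0`. The fields may take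
values in any normed commutative algebra, and are written as functions of `x` and then `t`. The
good system is the case `κ = -1`. -/
structure IsKBKSolution {𝕜 A : Type*} [NontriviallyNormedField 𝕜] [NormedCommRing A]
    [NormedAlgebra 𝕜 A] (κ : A) (η v : 𝕜 → 𝕜 → A) : Prop where
  contDiff_elevation : ContDiff 𝕜 2 (fun p : 𝕜 × 𝕜 => η p.1 p.2)
  contDiff_velocity : ContDiff 𝕜 3 (fun p : 𝕜 × 𝕜 => v p.1 p.2)
  mass (x t : 𝕜) :
    deriv (fun s => η x s) t + deriv (fun y => v y t) x + deriv (fun y => η y t * v y t) x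
      + κ * iteratedDeriv 3 (fun y => v y t) x = 0
  momentum (x t : 𝕜) :
    deriv (fun s => v x s) t + deriv (fun y => η y t) x + v x t * deriv (fun y => v y t) x = 0

namespace IsKBKSolution

section NontriviallyNormedField

variable {𝕜 A B : Type*} [NontriviallyNormedField 𝕜] [NormedCommRing A] [NormedAlgebra 𝕜 A]
  [NormedCommRing B] [NormedAlgebra 𝕜 B] {κ : A} {η v : 𝕜 → 𝕜 → A}

theorem map (φ : A →A[𝕜] B) (sol : IsKBKSolution κ η v) :
    IsKBKSolution (φ κ) (fun x t => φ (η x t)) (fun x t => φ (v x t)) := by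
  have hηx (t : 𝕜) : Differentiable 𝕜 (fun y => η y t) :=
    (contDiff_slice_fst sol.contDiff_elevation t).differentiable two_ne_zero
  have hηt (x : 𝕜) : Differentiable 𝕜 (fun s => η x s) :=
    (contDiff_slice_snd sol.contDiff_elevation x).differentiable two_ne_zero
  have hvx (t : 𝕜) : Differentiable 𝕜 (fun y => v y t) :=
    (contDiff_slice_fst sol.contDiff_velocity t).differentiable three_ne_zero
  have hvt (x : 𝕜) : Differentiable 𝕜 (fun s => v x s) :=
    (contDiff_slice_snd sol.contDiff_velocity x).differentiable three_ne_zero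
  have deriv_map {f : 𝕜 → A} {x : 𝕜} (hf : DifferentiableAt 𝕜 f x) :
      deriv (fun y => φ (f y)) x = φ (deriv f x) :=
    deriv_clm_comp_left φ.toContinuousLinearMap hf
  have iteratedDeriv_map (x t : 𝕜) :
      iteratedDeriv 3 (fun y => φ (v y t)) x = φ (iteratedDeriv 3 (fun y => v y t) x) :=
    iteratedDeriv_clm_comp_left φ.toContinuousLinearMap
      (contDiff_slice_fst sol.contDiff_velocity t).contDiffAt
  refine ⟨φ.toContinuousLinearMap.contDiff.comp sol.contDiff_elevation,
    φ.toContinuousLinearMap.contDiff.comp sol.contDiff_velocity, fun x t => ?_, fun x t => ?_⟩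
  · simp only [← map_mul, deriv_map (hηt x t), deriv_map (hvx t x),
      deriv_map ((hηx t x).fun_mul (hvx t x)), iteratedDeriv_map, ← map_add, sol.mass, map_zero]
  · simp only [deriv_map (hvt x t), deriv_map (hηx t x), deriv_map (hvx t x), ← map_mul,
      ← map_add, sol.momentum, map_zero]

theorem transformed_momentum (sol : IsKBKSolution κ η v) (c : A) (x t : 𝕜) :
    deriv (fun s => v x s) t + deriv (fun y => η y t - c * deriv (fun z => v z t) y) x
      + c * iteratedDeriv 2 (fun y => v y t) x + v x t * deriv (fun y => v y t) x = 0 := by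
  have hηx := (contDiff_slice_fst sol.contDiff_elevation t).differentiable two_ne_zero x
  have hvxx : DifferentiableAt 𝕜 (deriv fun y => v y t) x :=
    ((contDiff_slice_fst sol.contDiff_velocity t).of_le (by norm_num)).differentiable_deriv_two x
  rw [deriv_fun_sub hηx (hvxx.const_mul c), deriv_const_mul c hvxx, iteratedDeriv_succ,
    iteratedDeriv_one]
  linear_combination sol.momentum x t

end NontriviallyNormedField

section RCLike

variable {𝕜 A : Type*} [RCLike 𝕜] [NormedCommRing A] [NormedAlgebra 𝕜 A]
  {κ : A} {η v : 𝕜 → 𝕜 → A}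

theorem deriv_momentum (sol : IsKBKSolution κ η v) (x t : 𝕜) :
    deriv (fun s => deriv (fun y => v y s) x) t + iteratedDeriv 2 (fun y => η y t) x
      + deriv (fun y => v y t * deriv (fun z => v z t) y) x = 0 := by
  have hη := contDiff_slice_fst sol.contDiff_elevation t
  have hv := contDiff_slice_fst sol.contDiff_velocity t
  have hvt : DifferentiableAt 𝕜 (fun y => deriv (fun s => v y s) t) x :=
    (contDiff_slice_fst (contDiff_deriv_snd (m := 2) sol.contDiff_velocity (by norm_num))
      t).differentiable two_ne_zero x
  have hηx : DifferentiableAt 𝕜 (fun y => deriv (fun z => η z t) y) x :=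
    hη.differentiable_deriv_two x
  have hflux : DifferentiableAt 𝕜 (fun y => v y t * deriv (fun z => v z t) y) x :=
    (hv.differentiable three_ne_zero x).mul ((hv.of_le (by norm_num)).differentiable_deriv_two x)
  rw [deriv_deriv_comm sol.contDiff_velocity (by norm_num), iteratedDeriv_succ, iteratedDeriv_one,
    ← deriv_fun_add hvt hηx, ← deriv_fun_add (hvt.fun_add hηx) hflux]
  simp only [sol.momentum, deriv_const]

theorem transformed_mass (sol : IsKBKSolution κ η v) {c : A} (hc : c ^ 2 = κ) (x t : 𝕜) :
    deriv (fun s => η x s - c * deriv (fun y => v y s) x) t + deriv (fun y => v y t) x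
      - c * iteratedDeriv 2 (fun y => η y t - c * deriv (fun z => v z t) y) x
      + deriv (fun y => v y t * (η y t - c * deriv (fun z => v z t) y)) x = 0 := by
  have hη := contDiff_slice_fst sol.contDiff_elevation t
  have hv := contDiff_slice_fst sol.contDiff_velocity t
  have hv' : ContDiff 𝕜 2 (deriv fun y => v y t) := hv.deriv'
  have deriv_time : deriv (fun s => η x s - c * deriv (fun y => v y s) x) t
      = deriv (fun s => η x s) t - c * deriv (fun s => deriv (fun y => v y s) x) t := by
    have hηt := (contDiff_slice_snd sol.contDiff_elevation x).differentiable two_ne_zero t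
    have hvxt : DifferentiableAt 𝕜 (fun s => deriv (fun y => v y s) x) t :=
      (contDiff_slice_snd (f := fun x t => deriv (fun y => v y t) x) (n := 2)
        (contDiff_deriv_fst sol.contDiff_velocity (by norm_num)) x).differentiable two_ne_zero t
    rw [deriv_fun_sub hηt (hvxt.const_mul c), deriv_const_mul c hvxt]
  have deriv_space_twice : iteratedDeriv 2 (fun y => η y t - c * deriv (fun z => v z t) y) x
      = iteratedDeriv 2 (fun y => η y t) x - c * iteratedDeriv 3 (fun y => v y t) x := by
    rw [iteratedDeriv_fun_sub hη.contDiffAt (contDiff_const.mul hv').contDiffAt,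
      iteratedDeriv_const_mul c hv'.contDiffAt, iteratedDeriv_succ' (n := 2)]
  have deriv_flux : deriv (fun y => v y t * (η y t - c * deriv (fun z => v z t) y)) x
      = deriv (fun y => η y t * v y t) x
        - c * deriv (fun y => v y t * deriv (fun z => v z t) y) x := by
    have hvx := hv.differentiable three_ne_zero x
    have hηv := (hη.differentiable two_ne_zero x).fun_mul hvx
    have hvv' := hvx.fun_mul (hv'.differentiable two_ne_zero x)
    rw [← deriv_const_mul c hvv', ← deriv_fun_sub hηv (hvv'.const_mul c)]
    congr 1
    ext y
    ring
  rw [deriv_time, deriv_space_twice, deriv_flux]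
  linear_combination sol.mass x t - c * sol.deriv_momentum x t
    + iteratedDeriv 3 (fun y => v y t) x * hc

end RCLike

end IsKBKSolution

theorem stmt_13_general {𝕜 A : Type*} [RCLike 𝕜] [NormedCommRing A] [NormedAlgebra 𝕜 A]
    {c κ : A} (hc : c ^ 2 = κ) {η v h : 𝕜 → 𝕜 → A} (sol : IsKBKSolution κ η v)
    (hh : ∀ x t, h x t = η x t - c * deriv (fun y => v y t) x) :
    (∀ x t,
      deriv (fun s => h x s) t + deriv (fun y => v y t) x
        - c * iteratedDeriv 2 (fun y => h y t) x + deriv (fun y => v y t * h y t) x = 0) ∧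
    (∀ x t,
      deriv (fun s => v x s) t + deriv (fun y => h y t) x
        + c * iteratedDeriv 2 (fun y => v y t) x + v x t * deriv (fun y => v y t) x = 0) := by
  simp only [hh]
  exact ⟨sol.transformed_mass hc, sol.transformed_momentum c⟩

/-- The complex change of variable `h = η − i ∂_x v` transforms smooth solutions of the good
KBK system into solutions of the Schrödinger-like system
`∂_t h + ∂_x v − i∂_x² h + ∂_x(vh) = 0`, `∂_t v + ∂_x h + i∂_x² v + v∂_x v = 0`. -/
theorem stmt_13 (η v : ℝ → ℝ → ℝ)
    (hη : ContDiff ℝ (⊤ : ℕ∞) (fun p : ℝ × ℝ => η p.1 p.2))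
    (hv : ContDiff ℝ (⊤ : ℕ∞) (fun p : ℝ × ℝ => v p.1 p.2))
    (heq1 : ∀ x t : ℝ,
      deriv (fun s => η x s) t + deriv (fun y => v y t) x
        + deriv (fun y => η y t * v y t) x - iteratedDeriv 3 (fun y => v y t) x = 0)
    (heq2 : ∀ x t : ℝ,
      deriv (fun s => v x s) t + deriv (fun y => η y t) x
        + v x t * deriv (fun y => v y t) x = 0)
    (h : ℝ → ℝ → ℂ)
    (hh : ∀ x t : ℝ, h x t = (η x t : ℂ) - Complex.I * (deriv (fun y => v y t) x : ℂ)) :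
    (∀ x t : ℝ,
      deriv (fun s => h x s) t + (deriv (fun y => v y t) x : ℂ)
        - Complex.I * iteratedDeriv 2 (fun y => h y t) x
        + deriv (fun y => (v y t : ℂ) * h y t) x = 0) ∧
    (∀ x t : ℝ,
      (deriv (fun s => v x s) t : ℂ) + deriv (fun y => h y t) x
        + Complex.I * (iteratedDeriv 2 (fun y => v y t) x : ℂ)
        + (v x t : ℂ) * (deriv (fun y => v y t) x : ℂ) = 0) := by
  have sol : IsKBKSolution (-1) η v :=
    ⟨hη.of_le (WithTop.coe_le_coe.2 le_top), hv.of_le (WithTop.coe_le_coe.2 le_top),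
      fun x t => by simpa [sub_eq_add_neg] using heq1 x t, heq2⟩
  exact stmt_13_general (by simp) (sol.map ⟨Complex.ofRealAm, Complex.continuous_ofReal⟩) hh
end

section
/- Let ε > 0 and let v : ℝ² → ℝ² be a C³ vector field satisfying −ε Δv + v − (ε²/2)|v|² v = 0 on ℝ², where Δ acts componentwise and |v|² is the squared Euclidean norm, and set η := −(ε/2)|v|². Then ∇·v + ε ∇·(η v) − ε ∇·(Δv) = 0 and ∇η + (ε/2) ∇(|v|²) = 0 on ℝ²; consequently the time-independent pair (η, v) is a stationary solution of the two-dimensional good Kaup–Broer–Kupershmidt system ∂_t η + ∇·v + ε ∇·(η v) − ε Δ(∇·v) = 0, ∂_t v + ∇η + (ε/2) ∇(|v|²) = 0. -/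
/-- Partial derivative in the first variable of a function of two real variables. -/
noncomputable def pdx (f : ℝ → ℝ → ℝ) : ℝ → ℝ → ℝ :=
  fun x y => deriv (fun s => f s y) x

/-- Partial derivative in the second variable of a function of two real variables. -/
noncomputable def pdy (f : ℝ → ℝ → ℝ) : ℝ → ℝ → ℝ :=
  fun x y => deriv (fun s => f x s) y

/-- The Laplacian on `ℝ²` of a scalar function written in components. -/
noncomputable def lap (f : ℝ → ℝ → ℝ) : ℝ → ℝ → ℝ :=
  fun x y => pdx (pdx f) x y + pdy (pdy f) x y

/-!
The bound-state equation reads `ε Δv = v + ε η v`, so its divergence is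
`ε ∇·(Δv) = ∇·v + ε ∇·(η v)`. Symmetry of second derivatives gives `∇·(Δv) = Δ(∇·v)`, which turns
this into the stationary continuity equation. The momentum equation holds because
`η + (ε/2)|v|² = 0`.
-/

open Function

section SecondDerivative

variable {𝕜 E F : Type*} [NontriviallyNormedField 𝕜] [NormedAddCommGroup E] [NormedSpace 𝕜 E]
  [NormedAddCommGroup F] [NormedSpace 𝕜 F]

theorem fderiv_fderiv_apply {f : E → F} {p : E} (hf : DifferentiableAt 𝕜 (fderiv 𝕜 f) p)
    (v w : E) : fderiv 𝕜 (fun q => fderiv 𝕜 f q v) p w = fderiv 𝕜 (fderiv 𝕜 f) p w v := by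
  simp [fderiv_clm_apply hf (differentiableAt_const v)]

theorem fderiv_fderiv_apply_comm {f : E → F} {p : E} (hf : DifferentiableAt 𝕜 (fderiv 𝕜 f) p)
    (hsymm : IsSymmSndFDerivAt 𝕜 f p) (v w : E) :
    fderiv 𝕜 (fun q => fderiv 𝕜 f q v) p w = fderiv 𝕜 (fun q => fderiv 𝕜 f q w) p v := by
  rw [fderiv_fderiv_apply hf, fderiv_fderiv_apply hf, hsymm.eq]

end SecondDerivative

section Sections

variable {𝕜 F : Type*} [NontriviallyNormedField 𝕜] [NormedAddCommGroup F] [NormedSpace 𝕜 F]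
  {f : 𝕜 → 𝕜 → F} {x y : 𝕜}

theorem hasDerivAt_section_left (hf : DifferentiableAt 𝕜 (uncurry f) (x, y)) :
    HasDerivAt (fun s => f s y) (fderiv 𝕜 (uncurry f) (x, y) (1, 0)) x :=
  hf.hasFDerivAt.comp_hasDerivAt (f := fun s => (s, y)) x
    ((hasDerivAt_id x).prodMk (hasDerivAt_const x y))

theorem hasDerivAt_section_right (hf : DifferentiableAt 𝕜 (uncurry f) (x, y)) :
    HasDerivAt (fun s => f x s) (fderiv 𝕜 (uncurry f) (x, y) (0, 1)) y :=
  hf.hasFDerivAt.comp_hasDerivAt (f := fun s => (x, s)) y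
    ((hasDerivAt_const y x).prodMk (hasDerivAt_id y))

end Sections

section PartialDerivatives

variable {f g : ℝ → ℝ → ℝ} {m n : WithTop ℕ∞}

theorem uncurry_pdx_eq_fderiv (hf : Differentiable ℝ (uncurry f)) :
    uncurry (pdx f) = fun p => fderiv ℝ (uncurry f) p (1, 0) :=
  funext fun p => (hasDerivAt_section_left (hf p)).deriv

theorem uncurry_pdy_eq_fderiv (hf : Differentiable ℝ (uncurry f)) :
    uncurry (pdy f) = fun p => fderiv ℝ (uncurry f) p (0, 1) :=
  funext fun p => (hasDerivAt_section_right (hf p)).deriv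

theorem pdx_add (hf : Differentiable ℝ (uncurry f)) (hg : Differentiable ℝ (uncurry g)) :
    pdx (f + g) = pdx f + pdx g :=
  funext₂ fun x y => deriv_add (hasDerivAt_section_left (hf (x, y))).differentiableAt
    (hasDerivAt_section_left (hg (x, y))).differentiableAt

theorem pdy_add (hf : Differentiable ℝ (uncurry f)) (hg : Differentiable ℝ (uncurry g)) :
    pdy (f + g) = pdy f + pdy g :=
  funext₂ fun x y => deriv_add (hasDerivAt_section_right (hf (x, y))).differentiableAt
    (hasDerivAt_section_right (hg (x, y))).differentiableAt

theorem pdx_smul (c : ℝ) (f : ℝ → ℝ → ℝ) : pdx (c • f) = c • pdx f :=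
  funext₂ fun _ _ => deriv_const_mul_field c

theorem pdy_smul (c : ℝ) (f : ℝ → ℝ → ℝ) : pdy (c • f) = c • pdy f :=
  funext₂ fun _ _ => deriv_const_mul_field c

theorem contDiff_uncurry_pdx (hf : ContDiff ℝ n (uncurry f)) (hmn : m + 1 ≤ n) :
    ContDiff ℝ m (uncurry (pdx f)) := by
  rw [uncurry_pdx_eq_fderiv ((hf.of_le hmn).differentiable (by simp))]
  exact (hf.fderiv_right hmn).clm_apply contDiff_const

theorem contDiff_uncurry_pdy (hf : ContDiff ℝ n (uncurry f)) (hmn : m + 1 ≤ n) :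
    ContDiff ℝ m (uncurry (pdy f)) := by
  rw [uncurry_pdy_eq_fderiv ((hf.of_le hmn).differentiable (by simp))]
  exact (hf.fderiv_right hmn).clm_apply contDiff_const

theorem differentiable_uncurry_pdx (hf : ContDiff ℝ 2 (uncurry f)) :
    Differentiable ℝ (uncurry (pdx f)) :=
  (contDiff_uncurry_pdx hf one_add_one_eq_two.le).differentiable one_ne_zero

theorem differentiable_uncurry_pdy (hf : ContDiff ℝ 2 (uncurry f)) :
    Differentiable ℝ (uncurry (pdy f)) :=
  (contDiff_uncurry_pdy hf one_add_one_eq_two.le).differentiable one_ne_zero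

theorem pdx_pdy_comm (hf : ContDiff ℝ 2 (uncurry f)) : pdx (pdy f) = pdy (pdx f) := by
  have hf_diff : Differentiable ℝ (uncurry f) := hf.differentiable two_ne_zero
  have hfderiv_diff : Differentiable ℝ (fderiv ℝ (uncurry f)) :=
    (hf.fderiv_right one_add_one_eq_two.le).differentiable one_ne_zero
  have hsymm (p : ℝ × ℝ) : IsSymmSndFDerivAt ℝ (uncurry f) p :=
    hf.contDiffAt.isSymmSndFDerivAt (by simp)
  apply uncurry_injective
  rw [uncurry_pdx_eq_fderiv (differentiable_uncurry_pdy hf),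
    uncurry_pdy_eq_fderiv (differentiable_uncurry_pdx hf),
    uncurry_pdx_eq_fderiv hf_diff, uncurry_pdy_eq_fderiv hf_diff]
  exact funext fun p => fderiv_fderiv_apply_comm (hfderiv_diff p) (hsymm p) _ _

end PartialDerivatives

section Laplacian

variable {f g : ℝ → ℝ → ℝ}

theorem lap_add (hf : ContDiff ℝ 2 (uncurry f)) (hg : ContDiff ℝ 2 (uncurry g)) :
    lap (f + g) = lap f + lap g := by
  have hf_diff : Differentiable ℝ (uncurry f) := hf.differentiable two_ne_zero
  have hg_diff : Differentiable ℝ (uncurry g) := hg.differentiable two_ne_zero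
  change pdx (pdx (f + g)) + pdy (pdy (f + g)) = _
  rw [pdx_add hf_diff hg_diff, pdy_add hf_diff hg_diff,
    pdx_add (differentiable_uncurry_pdx hf) (differentiable_uncurry_pdx hg),
    pdy_add (differentiable_uncurry_pdy hf) (differentiable_uncurry_pdy hg)]
  exact add_add_add_comm _ _ _ _

theorem pdx_lap (hf : ContDiff ℝ 3 (uncurry f)) : pdx (lap f) = lap (pdx f) := by
  have hfx : ContDiff ℝ 2 (uncurry (pdx f)) := contDiff_uncurry_pdx hf two_add_one_eq_three.le
  have hfy : ContDiff ℝ 2 (uncurry (pdy f)) := contDiff_uncurry_pdy hf two_add_one_eq_three.le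
  calc pdx (lap f) = pdx (pdx (pdx f)) + pdx (pdy (pdy f)) :=
        pdx_add (differentiable_uncurry_pdx hfx) (differentiable_uncurry_pdy hfy)
    _ = pdx (pdx (pdx f)) + pdy (pdy (pdx f)) := by
        rw [pdx_pdy_comm hfy, pdx_pdy_comm (hf.of_le (by norm_num))]

theorem pdy_lap (hf : ContDiff ℝ 3 (uncurry f)) : pdy (lap f) = lap (pdy f) := by
  have hfx : ContDiff ℝ 2 (uncurry (pdx f)) := contDiff_uncurry_pdx hf two_add_one_eq_three.le
  have hfy : ContDiff ℝ 2 (uncurry (pdy f)) := contDiff_uncurry_pdy hf two_add_one_eq_three.le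
  calc pdy (lap f) = pdy (pdx (pdx f)) + pdy (pdy (pdy f)) :=
        pdy_add (differentiable_uncurry_pdx hfx) (differentiable_uncurry_pdy hfy)
    _ = pdx (pdx (pdy f)) + pdy (pdy (pdy f)) := by
        rw [pdx_pdy_comm (hf.of_le (by norm_num)), pdx_pdy_comm hfx]

theorem smul_lap_eq_of_boundState {ε : ℝ} {q η : ℝ → ℝ → ℝ}
    (hf : ∀ x y, -ε * lap f x y + f x y - ε ^ 2 / 2 * q x y * f x y = 0)
    (hη : ∀ x y, η x y = -(ε / 2) * q x y) : ε • lap f = f + ε • (η * f) := by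
  funext x y
  simp only [Pi.smul_apply, Pi.add_apply, Pi.mul_apply, smul_eq_mul, hη]
  linear_combination -hf x y

end Laplacian

section Divergence

variable {u₁ u₂ v₁ v₂ η : ℝ → ℝ → ℝ}

/-- The divergence `∇·v` of the planar vector field with components `v₁` and `v₂`. -/
noncomputable def divergence (v₁ v₂ : ℝ → ℝ → ℝ) : ℝ → ℝ → ℝ :=
  pdx v₁ + pdy v₂

theorem divergence_add (hu₁ : Differentiable ℝ (uncurry u₁)) (hu₂ : Differentiable ℝ (uncurry u₂))
    (hv₁ : Differentiable ℝ (uncurry v₁)) (hv₂ : Differentiable ℝ (uncurry v₂)) :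
    divergence (u₁ + v₁) (u₂ + v₂) = divergence u₁ u₂ + divergence v₁ v₂ := by
  rw [divergence, pdx_add hu₁ hv₁, pdy_add hu₂ hv₂]
  exact add_add_add_comm _ _ _ _

theorem divergence_smul (c : ℝ) (v₁ v₂ : ℝ → ℝ → ℝ) :
    divergence (c • v₁) (c • v₂) = c • divergence v₁ v₂ := by
  rw [divergence, pdx_smul, pdy_smul, ← smul_add, divergence]

theorem lap_divergence (hv₁ : ContDiff ℝ 3 (uncurry v₁)) (hv₂ : ContDiff ℝ 3 (uncurry v₂)) :
    lap (divergence v₁ v₂) = divergence (lap v₁) (lap v₂) := by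
  rw [divergence, divergence, pdx_lap hv₁, pdy_lap hv₂]
  exact lap_add (contDiff_uncurry_pdx hv₁ two_add_one_eq_three.le)
    (contDiff_uncurry_pdy hv₂ two_add_one_eq_three.le)

theorem smul_divergence_lap_of_smul_lap_eq {ε : ℝ} (hv₁ : Differentiable ℝ (uncurry v₁))
    (hv₂ : Differentiable ℝ (uncurry v₂)) (hη : Differentiable ℝ (uncurry η))
    (h₁ : ε • lap v₁ = v₁ + ε • (η * v₁)) (h₂ : ε • lap v₂ = v₂ + ε • (η * v₂)) :
    ε • divergence (lap v₁) (lap v₂) =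
      divergence v₁ v₂ + ε • divergence (η * v₁) (η * v₂) :=
  calc ε • divergence (lap v₁) (lap v₂)
      = divergence (v₁ + ε • (η * v₁)) (v₂ + ε • (η * v₂)) := by
        rw [← divergence_smul, h₁, h₂]
    _ = divergence v₁ v₂ + divergence (ε • (η * v₁)) (ε • (η * v₂)) :=
        divergence_add hv₁ hv₂ ((hη.mul hv₁).const_smul ε) ((hη.mul hv₂).const_smul ε)
    _ = divergence v₁ v₂ + ε • divergence (η * v₁) (η * v₂) := by
        rw [divergence_smul]

end Divergence

/-- A `C³` solution of the vector bound-state equation `−εΔv + v − (ε²/2)|v|²v = 0` on `ℝ²`,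
together with `η = −(ε/2)|v|²`, gives a stationary solution of the 2D good KBK system
(the vector field `v` is given by its components `v1, v2`). -/
theorem stmt_17 (ε : ℝ) (hε : 0 < ε) (v1 v2 η : ℝ → ℝ → ℝ)
    (hv1 : ContDiff ℝ 3 (fun p : ℝ × ℝ => v1 p.1 p.2))
    (hv2 : ContDiff ℝ 3 (fun p : ℝ × ℝ => v2 p.1 p.2))
    (heq1 : ∀ x y : ℝ, -ε * lap v1 x y + v1 x y
      - (ε ^ 2 / 2) * ((v1 x y) ^ 2 + (v2 x y) ^ 2) * v1 x y = 0)
    (heq2 : ∀ x y : ℝ, -ε * lap v2 x y + v2 x y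
      - (ε ^ 2 / 2) * ((v1 x y) ^ 2 + (v2 x y) ^ 2) * v2 x y = 0)
    (hη : ∀ x y : ℝ, η x y = -(ε / 2) * ((v1 x y) ^ 2 + (v2 x y) ^ 2)) :
    -- ∇·v + ε ∇·(η v) − ε ∇·(Δv) = 0
    (∀ x y : ℝ,
      (pdx v1 x y + pdy v2 x y)
        + ε * (pdx (fun a b => η a b * v1 a b) x y + pdy (fun a b => η a b * v2 a b) x y)
        - ε * (pdx (lap v1) x y + pdy (lap v2) x y) = 0) ∧
    -- ∇η + (ε/2)∇(|v|²) = 0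
    (∀ x y : ℝ,
      pdx η x y + (ε / 2) * pdx (fun a b => (v1 a b) ^ 2 + (v2 a b) ^ 2) x y = 0 ∧
      pdy η x y + (ε / 2) * pdy (fun a b => (v1 a b) ^ 2 + (v2 a b) ^ 2) x y = 0) ∧
    -- stationary solution of the 2D good KBK system: ∇·v + ε ∇·(ηv) − ε Δ(∇·v) = 0
    (∀ x y : ℝ,
      (pdx v1 x y + pdy v2 x y)
        + ε * (pdx (fun a b => η a b * v1 a b) x y + pdy (fun a b => η a b * v2 a b) x y)
        - ε * lap (fun a b => pdx v1 a b + pdy v2 a b) x y = 0) := by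
  have hη_eq : η = (-(ε / 2)) • (v1 ^ 2 + v2 ^ 2) := funext₂ hη
  have hv1_diff : Differentiable ℝ (uncurry v1) := hv1.differentiable three_ne_zero
  have hv2_diff : Differentiable ℝ (uncurry v2) := hv2.differentiable three_ne_zero
  have hη_diff : Differentiable ℝ (uncurry η) := by
    rw [hη_eq]
    exact ((hv1_diff.pow 2).add (hv2_diff.pow 2)).const_smul (-(ε / 2))
  have bound1 : ε • lap v1 = v1 + ε • (η * v1) := smul_lap_eq_of_boundState heq1 hη
  have bound2 : ε • lap v2 = v2 + ε • (η * v2) := smul_lap_eq_of_boundState heq2 hη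
  have continuity_eq := smul_divergence_lap_of_smul_lap_eq hv1_diff hv2_diff hη_diff bound1 bound2
  refine ⟨fun x y => sub_eq_zero.2 (congr_fun₂ continuity_eq x y).symm,
    fun x y => ?_, fun x y => ?_⟩
  · have grad_x : pdx η x y = -(ε / 2) * pdx (v1 ^ 2 + v2 ^ 2) x y := by
      rw [hη_eq, pdx_smul]
      rfl
    have grad_y : pdy η x y = -(ε / 2) * pdy (v1 ^ 2 + v2 ^ 2) x y := by
      rw [hη_eq, pdy_smul]
      rfl
    exact ⟨by linear_combination grad_x, by linear_combination grad_y⟩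
  · rw [← lap_divergence hv1 hv2] at continuity_eq
    exact sub_eq_zero.2 (congr_fun₂ continuity_eq x y).symm
end

section
/- Let (η, v) be a smooth real solution on ℝ×ℝ of the good Kaup–Broer–Kupershmidt system ∂_t η + ∂_x v + ∂_x(η v) − ∂_x³ v = 0, ∂_t v + ∂_x η + v ∂_x v = 0. Define the complex-valued functions ρ_n and j_n for n ≥ 1 by: ρ₁ = (1/2)η + (i/2)∂_x v; ρ₂ = i v ρ₁ − 2 ∂_x ρ₁ + (i/2) v; ρ_{n+1} = i v ρ_n − ρ_{n−1} − 2 ∂_x ρ_n − 2 Σ_{k=1}^{n−1} ρ_k ρ_{n−k} for n ≥ 2; j₁ = (1/4) v + (1/2) v ρ₁ − (i/2) ρ₂; j_n = (1/2) v ρ_n − (i/2) ρ_{n+1} + (i/2) ρ_{n−1} for n ≥ 2. Then for every n ≥ 1 the local conservation law ∂_t ρ_n + ∂_x j_n = 0 holds on ℝ×ℝ. -/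
/-!
In terms of `w = i v`, the derivation `S = -i ∂_t` and `U = ∑_{n ≥ 1} 2 ρ_n X ^ n`, the system and
the recursion have integer coefficients, and the recursion becomes the Riccati equation
`U = X (w U - 2 ∂_x U - U² + η + ∂_x w - X (U - w))`. Applying `S` to it, the defect
`G = S U - ∂_x (w U - ∂_x U - X (U - w)) + U ∂_x U` is found to satisfy the homogeneous linear
equation `G = X (w G - X G - 2 ∂_x G - 2 U G)`. Hence `G` is divisible by every power of `X`, so
it vanishes, and with the Riccati equation `X S U` becomes an `x`-derivative, whose coefficients
are the conservation laws.
-/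

namespace KaupBroer

open PowerSeries Finset
open scoped ContDiff

section Coeffwise

variable {R A : Type*} [CommRing R] [CommRing A] [Algebra R A]

/-- The extension of a derivation of `A` to `A⟦X⟧` that acts on each coefficient and kills `X`. -/
noncomputable def coeffwise (d : Derivation R A A) : Derivation R A⟦X⟧ A⟦X⟧ :=
  Derivation.mk'
    { toFun f := mk fun n => d (coeff n f)
      map_add' f g := by ext n; simp
      map_smul' c f := by ext n; simp }
    fun f g => by
      ext n
      simp [mul_comm g, coeff_mul, sum_add_distrib, mul_comm (d _)]

@[simp]
theorem coeff_coeffwise (d : Derivation R A A) (f : A⟦X⟧) (n : ℕ) :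
    coeff n (coeffwise d f) = d (coeff n f) := by
  simp [coeffwise]

@[simp]
theorem coeffwise_C (d : Derivation R A A) (a : A) : coeffwise d (C a) = C (d a) := by
  ext n
  simp [coeff_C, apply_ite d]

@[simp]
theorem coeffwise_X (d : Derivation R A A) : coeffwise d (X : A⟦X⟧) = 0 := by
  ext n
  simp [coeff_X, apply_ite d]

theorem coeffwise_comm {d s : Derivation R A A} (hcomm : ∀ a, s (d a) = d (s a)) (f : A⟦X⟧) :
    coeffwise s (coeffwise d f) = coeffwise d (coeffwise s f) := by
  ext n
  simp [hcomm]

theorem X_pow_dvd_coeffwise (d : Derivation R A A) {f : A⟦X⟧} {n : ℕ} (hf : X ^ n ∣ f) :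
    X ^ n ∣ coeffwise d f := by
  rw [X_pow_dvd_iff] at hf ⊢
  intro m hm
  rw [coeff_coeffwise, hf m hm, map_zero]

theorem coeff_succ_mul_of_constantCoeff_eq_zero {f g : A⟦X⟧} (hf : constantCoeff f = 0)
    (hg : constantCoeff g = 0) (n : ℕ) :
    coeff (n + 1) (f * g) = ∑ k ∈ Icc 1 n, coeff k f * coeff (n + 1 - k) g := by
  rw [coeff_mul, Nat.sum_antidiagonal_eq_sum_range_succ (fun i j => coeff i f * coeff j g),
    sum_range_succ, sum_range_succ', ← Ico_add_one_right_eq_Icc, sum_Ico_eq_sum_range]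
  simp [hf, hg, add_comm 1]

theorem eq_zero_of_eq_X_mul {f g : A⟦X⟧} (hfg : f = X * g) (hg : ∀ n, X ^ n ∣ f → X ^ n ∣ g) :
    f = 0 := by
  have hdvd (n : ℕ) : X ^ n ∣ f := by
    induction n with
    | zero => simp
    | succ n ih =>
      rw [hfg, pow_succ']
      exact mul_dvd_mul_left X (hg n ih)
  ext n
  exact X_pow_dvd_iff.mp (hdvd (n + 1)) n n.lt_succ_self

end Coeffwise

section Riccati

theorem riccati_defect {R B : Type*} [CommRing R] [CommRing B] [Algebra R B]
    {D S : Derivation R B B} (hcomm : ∀ b, S (D b) = D (S b)) {z u w η : B}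
    (hDz : D z = 0) (hSz : S z = 0)
    (hη : S η = D w + D (η * w) - D (D (D w))) (hw : S w = w * D w - D η)
    (hu : u = z * (w * u - 2 * D u - u * u + (η + D w) - z * (u - w)))
    {G : B} (hG : G = S u - D (w * u - D u - z * (u - w)) + u * D u) :
    G = z * (w * G - z * G - 2 * D G - 2 * (u * G)) := by
  have hSu := congrArg S hu
  have hDu := congrArg D hu
  have hDDu := congrArg D hDu
  subst hG
  simp only [map_add, map_sub, Derivation.leibniz, hDz, hSz, hcomm, hη, hw, smul_eq_mul, mul_zero,
    add_zero, two_mul] at hSu hDu hDDu ⊢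
  linear_combination hSu - D w * hu - (w - z - u) * hDu + hDDu

variable {R A : Type*} [CommRing R] [CommRing A] [Algebra R A] {d s : Derivation R A A}

theorem riccati_conservation (hcomm : ∀ a, s (d a) = d (s a)) {η w : A}
    (hη : s η = d w + d (η * w) - d (d (d w))) (hw : s w = w * d w - d η) {u : A⟦X⟧}
    (hu : u = X * (C w * u - 2 * coeffwise d u - u * u + C (η + d w) - X * (u - C w))) :
    coeffwise s u
      = coeffwise d (C w * u - coeffwise d u - X * (u - C w)) - u * coeffwise d u := by
  set D := coeffwise d
  set G := coeffwise s u - D (C w * u - D u - X * (u - C w)) + u * D u with hG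
  have hlin : G = X * (C w * G - X * G - 2 * D G - 2 * (u * G)) :=
    riccati_defect (η := C η) (coeffwise_comm hcomm) (coeffwise_X d) (coeffwise_X s)
      (by simp [hη, ← map_mul, -Derivation.leibniz]) (by simp [hw]) (by simpa [D] using hu) hG
  have hG0 : G = 0 := eq_zero_of_eq_X_mul hlin fun n hn => by
    have hDn := X_pow_dvd_coeffwise d hn
    exact (((hn.mul_left _).sub (hn.mul_left _)).sub (hDn.mul_left _)).sub
      ((hn.mul_left _).mul_left _)
  linear_combination hG0

theorem riccati_flux (hcomm : ∀ a, s (d a) = d (s a)) {η w : A}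
    (hη : s η = d w + d (η * w) - d (d (d w))) (hw : s w = w * d w - d η) {u : A⟦X⟧}
    (hu : u = X * (C w * u - 2 * coeffwise d u - u * u + C (η + d w) - X * (u - C w))) :
    X * (2 * coeffwise s u)
      = coeffwise d (u + X * (C w * u - C (η + d w) - X * (u - C w))) := by
  have hDu := congrArg (coeffwise d) hu
  rw [riccati_conservation hcomm hη hw hu]
  simp only [map_add, map_sub, Derivation.leibniz, coeffwise_X, coeffwise_C, smul_eq_mul, mul_zero,
    add_zero, two_mul] at hDu ⊢
  linear_combination -hDu

end Riccati

section Densities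

variable {A : Type*} [CommRing A] [Algebra ℂ A]

/-- The good Kaup–Broer–Kupershmidt system for `η` and `v`, with the derivations `D` and `T`
standing for `∂_x` and `∂_t`. -/
structure IsSolution (D T : Derivation ℂ A A) (η v : A) : Prop where
  continuity : T η + D v + D (η * v) - D (D (D v)) = 0
  momentum : T v + D η + v * D v = 0

/-- The densities `ρ_n`, with `D` standing for `∂_x`. Setting `ρ_0 = -(i/2) v` makes `ρ_2` an
instance of the general recursion and `j_1` an instance of the general formula for `j_n`. -/
noncomputable def density (D : Derivation ℂ A A) (η v : A) : ℕ → A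
  | 0 => -(Complex.I / 2) • v
  | 1 => (1 / 2 : ℂ) • η + (Complex.I / 2) • D v
  | n + 2 => Complex.I • (v * density D η v (n + 1)) - density D η v n
      - (2 : ℂ) • D (density D η v (n + 1))
      - (2 : ℂ) • ∑ k ∈ (Icc 1 n).attach, density D η v k * density D η v (n + 1 - k)
  decreasing_by all_goals grind

/-- The currents `j_n`, meaningful for `n ≥ 1`. -/
noncomputable def current (D : Derivation ℂ A A) (η v : A) (n : ℕ) : A :=
  (1 / 2 : ℂ) • (v * density D η v n) - (Complex.I / 2) • density D η v (n + 1)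
    + (Complex.I / 2) • density D η v (n - 1)

/-- The generating function `∑_{n ≥ 1} 2 ρ_n X ^ n`. -/
noncomputable def densitySeries (D : Derivation ℂ A A) (η v : A) : A⟦X⟧ :=
  X * PowerSeries.mk fun n => (2 : ℂ) • density D η v (n + 1)

variable (D : Derivation ℂ A A) (η v : A)

theorem density_add_two (n : ℕ) : density D η v (n + 2) =
    Complex.I • (v * density D η v (n + 1)) - density D η v n
      - (2 : ℂ) • D (density D η v (n + 1))
      - (2 : ℂ) • ∑ k ∈ Icc 1 n, density D η v k * density D η v (n + 1 - k) := by
  rw [density, sum_attach (Icc 1 n) fun k => density D η v k * density D η v (n + 1 - k)]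

@[simp]
theorem constantCoeff_densitySeries : constantCoeff (densitySeries D η v) = 0 := by
  simp [densitySeries]

theorem coeff_densitySeries {n : ℕ} (hn : n ≠ 0) :
    coeff n (densitySeries D η v) = (2 : ℂ) • density D η v n := by
  obtain ⟨n, rfl⟩ := Nat.exists_eq_succ_of_ne_zero hn
  simp [densitySeries, coeff_succ_X_mul]

theorem coeff_succ_densitySeries_mul_self (n : ℕ) :
    coeff (n + 1) (densitySeries D η v * densitySeries D η v)
      = (4 : ℂ) • ∑ k ∈ Icc 1 n, density D η v k * density D η v (n + 1 - k) := by
  rw [coeff_succ_mul_of_constantCoeff_eq_zero (by simp) (by simp), smul_sum]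
  refine sum_congr rfl fun k hk => ?_
  have hk := mem_Icc.mp hk
  rw [coeff_densitySeries _ _ _ (by lia), coeff_densitySeries _ _ _ (by lia),
    smul_mul_smul_comm]
  norm_num

theorem coeff_densitySeries_sub_coeff_C (n : ℕ) :
    coeff n (densitySeries D η v) - coeff n (C (Complex.I • v)) = (2 : ℂ) • density D η v n := by
  rcases n with _ | n
  · simp only [coeff_zero_eq_constantCoeff, constantCoeff_densitySeries, constantCoeff_C, density]
    module
  · simp [coeff_densitySeries]

theorem densitySeries_riccati : densitySeries D η v =
    X * (C (Complex.I • v) * densitySeries D η v - 2 * coeffwise D (densitySeries D η v)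
      - densitySeries D η v * densitySeries D η v + C (η + D (Complex.I • v))
      - X * (densitySeries D η v - C (Complex.I • v))) := by
  ext n
  rcases n with _ | n
  · simp
  rw [coeff_succ_X_mul]
  simp only [map_sub, map_add (coeff _), two_mul, coeff_C_mul, coeff_coeffwise]
  rcases n with _ | n
  · simp [coeff_densitySeries, density, smul_smul, mul_div_cancel₀]
  · simp only [coeff_succ_X_mul, coeff_succ_C, coeff_succ_densitySeries_mul_self,
      coeff_densitySeries_sub_coeff_C, map_sub, coeff_densitySeries D η v (Nat.add_one_ne_zero _),
      density_add_two, Derivation.map_smul, smul_mul_smul_comm]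
    module

theorem smul_current_succ (n : ℕ) :
    (4 * Complex.I) • current D η v (n + 1) = (2 : ℂ) • density D η v (n + 2) +
      ((Complex.I • v) * ((2 : ℂ) • density D η v (n + 1)) - (2 : ℂ) • density D η v n) := by
  have hI : 4 * Complex.I * (Complex.I / 2) = -2 := by linear_combination 2 * Complex.I_mul_I
  simp only [current, smul_sub, smul_add, smul_smul, hI, smul_mul_smul_comm, Nat.add_sub_cancel]
  module

variable {D η v}

theorem IsSolution.conservation {T : Derivation ℂ A A} (hcomm : ∀ a, T (D a) = D (T a))
    (hsol : IsSolution D T η v) (n : ℕ) :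
    T (density D η v (n + 1)) + D (current D η v (n + 1)) = 0 := by
  have hη : (-Complex.I • T) η = D (Complex.I • v) + D (η * (Complex.I • v))
      - D (D (D (Complex.I • v))) := by
    simp only [Derivation.smul_apply, Derivation.map_smul, mul_smul_comm]
    linear_combination (norm := module) -Complex.I • hsol.continuity
  have hw : (-Complex.I • T) (Complex.I • v) = (Complex.I • v) * D (Complex.I • v) - D η := by
    simp only [Derivation.smul_apply, Derivation.map_smul, smul_mul_smul_comm, smul_smul,
      mul_neg, Complex.I_mul_I]
    linear_combination (norm := module) hsol.momentum
  have hflux := congrArg (coeff (n + 2))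
    (riccati_flux (by simp [hcomm]) hη hw (densitySeries_riccati D η v))
  simp only [coeff_succ_X_mul, coeff_succ_C, coeff_C_mul, coeff_coeffwise, map_add (coeff _),
    map_sub (coeff _), coeff_densitySeries_sub_coeff_C, two_mul, sub_zero,
    coeff_densitySeries D η v (Nat.add_one_ne_zero _), Derivation.smul_apply] at hflux
  suffices (4 * Complex.I) • (T (density D η v (n + 1)) + D (current D η v (n + 1))) = 0 from
    (smul_eq_zero.mp this).resolve_left (by simp)
  rw [smul_add, ← D.map_smul, smul_current_succ, ← hflux, Derivation.map_smul]
  module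

end Densities

section SmoothFunctions

variable {E : Type*} [NormedAddCommGroup E] [NormedSpace ℝ E]

variable (E) in
/-- The algebra of smooth complex-valued functions on a real normed space. -/
def smoothFunctions : Subalgebra ℂ (E → ℂ) where
  carrier := {f | ContDiff ℝ ∞ f}
  mul_mem' hf hg := ContDiff.mul hf.out hg.out
  add_mem' hf hg := ContDiff.add hf.out hg.out
  algebraMap_mem' _ := Set.mem_ofPred.mpr contDiff_const

theorem mem_smoothFunctions {f : E → ℂ} : f ∈ smoothFunctions E ↔ ContDiff ℝ ∞ f :=
  Iff.rfl

theorem contDiff_coe (f : smoothFunctions E) : ContDiff ℝ ∞ (f : E → ℂ) :=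
  mem_smoothFunctions.mp f.2

theorem differentiable_coe (f : smoothFunctions E) : Differentiable ℝ (f : E → ℂ) :=
  (contDiff_coe f).differentiable (by simp)

/-- Differentiation in the direction `e`, as a derivation of the algebra of smooth functions. -/
noncomputable def dirDeriv (e : E) : Derivation ℂ (smoothFunctions E) (smoothFunctions E) :=
  Derivation.mk'
    { toFun f := ⟨fun p => fderiv ℝ f p e, mem_smoothFunctions.mpr <|
        ((contDiff_coe f).fderiv_right (by simp)).clm_apply contDiff_const⟩
      map_add' f g := by
        ext p
        simp [fderiv_add (differentiable_coe f p) (differentiable_coe g p)]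
      map_smul' c f := by
        ext p
        simp [fderiv_const_smul (differentiable_coe f p)] }
    fun f g => by
      ext p
      simp [fderiv_mul (differentiable_coe f p) (differentiable_coe g p)]

theorem dirDeriv_comm (e e' : E) (f : smoothFunctions E) :
    dirDeriv e (dirDeriv e' f) = dirDeriv e' (dirDeriv e f) := by
  ext p
  have hf : DifferentiableAt ℝ (fderiv ℝ (f : E → ℂ)) p :=
    ((contDiff_coe f).fderiv_right (m := ∞) (by simp)).differentiable (by simp) p
  have hsnd (a b : E) : (dirDeriv a (dirDeriv b f) : E → ℂ) p
      = fderiv ℝ (fderiv ℝ (f : E → ℂ)) p a b := by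
    change fderiv ℝ (fun q => fderiv ℝ (f : E → ℂ) q b) p a = _
    rw [fderiv_clm_apply hf (differentiableAt_const b)]
    simp
  rw [hsnd, hsnd]
  exact ((contDiff_infty.mp (contDiff_coe f) 2).contDiffAt.isSymmSndFDerivAt (by simp)).eq e e'

end SmoothFunctions

section Plane

/-- The derivation `∂_x` on smooth functions of `(x, t)`. -/
noncomputable abbrev partialX :
    Derivation ℂ (smoothFunctions (ℝ × ℝ)) (smoothFunctions (ℝ × ℝ)) :=
  dirDeriv (1, 0)

/-- The derivation `∂_t` on smooth functions of `(x, t)`. -/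
noncomputable abbrev partialT :
    Derivation ℂ (smoothFunctions (ℝ × ℝ)) (smoothFunctions (ℝ × ℝ)) :=
  dirDeriv (0, 1)

theorem partialT_partialX (f : smoothFunctions (ℝ × ℝ)) :
    partialT (partialX f) = partialX (partialT f) :=
  dirDeriv_comm _ _ f

theorem deriv_eq_partialX (f : smoothFunctions (ℝ × ℝ)) (x t : ℝ) :
    deriv (fun y => f.1 (y, t)) x = (partialX f).1 (x, t) :=
  ((differentiable_coe f (x, t)).hasFDerivAt.comp_hasDerivAt x
    ((hasDerivAt_id x).prodMk (hasDerivAt_const x t))).deriv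

theorem iteratedDeriv_eq_partialX (n : ℕ) (f : smoothFunctions (ℝ × ℝ)) (x t : ℝ) :
    iteratedDeriv n (fun y => f.1 (y, t)) x = (partialX^[n] f).1 (x, t) := by
  induction n generalizing x with
  | zero => rfl
  | succ n ih =>
    rw [iteratedDeriv_succ, funext ih, deriv_eq_partialX, Function.iterate_succ_apply']

theorem deriv_eq_partialT (f : smoothFunctions (ℝ × ℝ)) (x t : ℝ) :
    deriv (fun s => f.1 (x, s)) t = (partialT f).1 (x, t) :=
  ((differentiable_coe f (x, t)).hasFDerivAt.comp_hasDerivAt t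
    ((hasDerivAt_const t x).prodMk (hasDerivAt_id t))).deriv

variable {η v : smoothFunctions (ℝ × ℝ)}

theorem isSolution_partialX_partialT
    (hcont : ∀ x t : ℝ,
      deriv (fun s => η.1 (x, s)) t + deriv (fun y => v.1 (y, t)) x
        + deriv (fun y => η.1 (y, t) * v.1 (y, t)) x
        - iteratedDeriv 3 (fun y => v.1 (y, t)) x = 0)
    (hmom : ∀ x t : ℝ,
      deriv (fun s => v.1 (x, s)) t + deriv (fun y => η.1 (y, t)) x
        + v.1 (x, t) * deriv (fun y => v.1 (y, t)) x = 0) :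
    IsSolution partialX partialT η v where
  continuity := by
    ext ⟨x, t⟩
    have hprod : deriv (fun y => η.1 (y, t) * v.1 (y, t)) x = (partialX (η * v)).1 (x, t) :=
      deriv_eq_partialX (η * v) x t
    have h := hcont x t
    simp only [hprod, iteratedDeriv_eq_partialX, deriv_eq_partialX, deriv_eq_partialT] at h
    exact h
  momentum := by
    ext ⟨x, t⟩
    have h := hmom x t
    simp only [deriv_eq_partialX, deriv_eq_partialT] at h
    exact h

theorem density_zero_apply (p : ℝ × ℝ) :
    (density partialX η v 0).1 p = -(Complex.I / 2) * v.1 p := by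
  simp [density]

theorem eq_density {ρ : ℕ → ℝ → ℝ → ℂ}
    (hρ1 : ∀ x t : ℝ,
      ρ 1 x t = (1 / 2) * η.1 (x, t) + (Complex.I / 2) * deriv (fun y => v.1 (y, t)) x)
    (hρ2 : ∀ x t : ℝ,
      ρ 2 x t = Complex.I * v.1 (x, t) * ρ 1 x t - 2 * deriv (fun y => ρ 1 y t) x
        + (Complex.I / 2) * v.1 (x, t))
    (hρrec : ∀ n : ℕ, 2 ≤ n → ∀ x t : ℝ,
      ρ (n + 1) x t = Complex.I * v.1 (x, t) * ρ n x t - ρ (n - 1) x t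
        - 2 * deriv (fun y => ρ n y t) x
        - 2 * ∑ k ∈ Icc 1 (n - 1), ρ k x t * ρ (n - k) x t) {n : ℕ} (hn : 1 ≤ n) :
    ρ n = fun x t => (density partialX η v n).1 (x, t) := by
  induction n using Nat.strong_induction_on with
  | _ n ih =>
  funext x t
  match n with
  | 1 => simp [density, hρ1, deriv_eq_partialX]
  | 2 =>
    rw [density_add_two, hρ2, ih 1 (by lia) le_rfl, deriv_eq_partialX]
    simp [density_zero_apply, mul_assoc, add_sub_right_comm]
  | n + 3 =>
    have hsum : ∑ k ∈ Icc 1 (n + 1), ρ k x t * ρ (n + 2 - k) x t =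
        (∑ k ∈ Icc 1 (n + 1),
          density partialX η v k * density partialX η v (n + 2 - k)).1 (x, t) := by
      simp only [AddSubmonoidClass.coe_finsetSum, Finset.sum_apply, MulMemClass.coe_mul,
        Pi.mul_apply]
      refine sum_congr rfl fun k hk => ?_
      have hk := mem_Icc.mp hk
      rw [ih k (by lia) hk.1, ih (n + 2 - k) (by lia) (by lia)]
    rw [density_add_two, hρrec (n + 2) (by lia), ih (n + 2) (by lia) (by lia), deriv_eq_partialX,
      show n + 2 - 1 = n + 1 from rfl, hsum, ih (n + 1) (by lia) (by lia)]
    simp [mul_assoc]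

theorem eq_current {ρ j : ℕ → ℝ → ℝ → ℂ}
    (hρ : ∀ {n}, 1 ≤ n → ρ n = fun x t => (density partialX η v n).1 (x, t))
    (hj1 : ∀ x t : ℝ,
      j 1 x t = (1 / 4) * v.1 (x, t) + (1 / 2) * v.1 (x, t) * ρ 1 x t
        - (Complex.I / 2) * ρ 2 x t)
    (hjn : ∀ n : ℕ, 2 ≤ n → ∀ x t : ℝ,
      j n x t = (1 / 2) * v.1 (x, t) * ρ n x t - (Complex.I / 2) * ρ (n + 1) x t
        + (Complex.I / 2) * ρ (n - 1) x t) {n : ℕ} (hn : 1 ≤ n) :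
    j n = fun x t => (current partialX η v n).1 (x, t) := by
  funext x t
  obtain rfl | hn2 := hn.eq_or_lt
  · have hzero : (Complex.I / 2) * (density partialX η v 0).1 (x, t) = (1 / 4) * v.1 (x, t) := by
      rw [density_zero_apply]
      linear_combination (-v.1 (x, t) / 4) * Complex.I_mul_I
    rw [hj1, hρ le_rfl, hρ one_le_two, ← hzero]
    simp [current, mul_assoc, add_comm, add_sub_assoc]
  · rw [hjn n hn2, hρ hn, hρ (n := n + 1) (by lia), hρ (n := n - 1) (by lia)]
    simp [current, mul_assoc]

end Plane

section OfReal

theorem ofReal_deriv (g : ℝ → ℝ) (x : ℝ) :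
    ((deriv g x : ℝ) : ℂ) = deriv (fun y => (g y : ℂ)) x := by
  by_cases hg : DifferentiableAt ℝ g x
  · exact hg.hasDerivAt.ofReal_comp.deriv.symm
  · have hg' : ¬ DifferentiableAt ℝ (fun y => (g y : ℂ)) x := fun h =>
      hg (Complex.reCLM.differentiableAt.comp x h)
    rw [deriv_zero_of_not_differentiableAt hg, deriv_zero_of_not_differentiableAt hg',
      Complex.ofReal_zero]

theorem ofReal_iteratedDeriv (n : ℕ) (g : ℝ → ℝ) (x : ℝ) :
    ((iteratedDeriv n g x : ℝ) : ℂ) = iteratedDeriv n (fun y => (g y : ℂ)) x := by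
  induction n generalizing x with
  | zero => simp
  | succ n ih => simp only [iteratedDeriv_succ, ofReal_deriv, ih]

end OfReal

end KaupBroer

theorem stmt_18_general (η v : ℝ → ℝ → ℂ)
    (hη : ContDiff ℝ (⊤ : ℕ∞) (fun p : ℝ × ℝ => η p.1 p.2))
    (hv : ContDiff ℝ (⊤ : ℕ∞) (fun p : ℝ × ℝ => v p.1 p.2))
    (heq1 : ∀ x t : ℝ,
      deriv (fun s => η x s) t + deriv (fun y => v y t) x
        + deriv (fun y => η y t * v y t) x - iteratedDeriv 3 (fun y => v y t) x = 0)
    (heq2 : ∀ x t : ℝ,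
      deriv (fun s => v x s) t + deriv (fun y => η y t) x
        + v x t * deriv (fun y => v y t) x = 0)
    (ρ j : ℕ → ℝ → ℝ → ℂ)
    (hρ1 : ∀ x t : ℝ,
      ρ 1 x t = (1 / 2) * η x t + (Complex.I / 2) * deriv (fun y => v y t) x)
    (hρ2 : ∀ x t : ℝ,
      ρ 2 x t = Complex.I * v x t * ρ 1 x t - 2 * deriv (fun y => ρ 1 y t) x
        + (Complex.I / 2) * v x t)
    (hρrec : ∀ n : ℕ, 2 ≤ n → ∀ x t : ℝ,
      ρ (n + 1) x t = Complex.I * v x t * ρ n x t - ρ (n - 1) x t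
        - 2 * deriv (fun y => ρ n y t) x
        - 2 * ∑ k ∈ Finset.Icc 1 (n - 1), ρ k x t * ρ (n - k) x t)
    (hj1 : ∀ x t : ℝ,
      j 1 x t = (1 / 4) * v x t + (1 / 2) * v x t * ρ 1 x t
        - (Complex.I / 2) * ρ 2 x t)
    (hjn : ∀ n : ℕ, 2 ≤ n → ∀ x t : ℝ,
      j n x t = (1 / 2) * v x t * ρ n x t - (Complex.I / 2) * ρ (n + 1) x t
        + (Complex.I / 2) * ρ (n - 1) x t) :
    ∀ n : ℕ, 1 ≤ n → ∀ x t : ℝ,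
      deriv (fun s => ρ n x s) t + deriv (fun y => j n y t) x = 0 := by
  intro n hn x t
  let E : KaupBroer.smoothFunctions (ℝ × ℝ) := ⟨_, KaupBroer.mem_smoothFunctions.mpr hη⟩
  let V : KaupBroer.smoothFunctions (ℝ × ℝ) := ⟨_, KaupBroer.mem_smoothFunctions.mpr hv⟩
  have hsol : KaupBroer.IsSolution _ _ E V := KaupBroer.isSolution_partialX_partialT heq1 heq2
  have hρ {n : ℕ} (hn : 1 ≤ n) := KaupBroer.eq_density (η := E) (v := V) hρ1 hρ2 hρrec hn
  rw [hρ hn, KaupBroer.eq_current hρ hj1 hjn hn, KaupBroer.deriv_eq_partialT,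
    KaupBroer.deriv_eq_partialX]
  obtain ⟨n, rfl⟩ := Nat.exists_eq_add_of_le' hn
  exact congrFun (congrArg Subtype.val (hsol.conservation KaupBroer.partialT_partialX n)) (x, t)

/-- The infinite family of complex local conservation laws `∂_t ρ_n + ∂_x j_n = 0` for smooth
solutions of the good Kaup–Broer–Kupershmidt system, where the densities `ρ_n` and currents
`j_n` are defined by the recursion of Nabelek–Ablowitz–Fokas. -/
theorem stmt_18 (η v : ℝ → ℝ → ℝ)
    (hη : ContDiff ℝ (⊤ : ℕ∞) (fun p : ℝ × ℝ => η p.1 p.2))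
    (hv : ContDiff ℝ (⊤ : ℕ∞) (fun p : ℝ × ℝ => v p.1 p.2))
    (heq1 : ∀ x t : ℝ,
      deriv (fun s => η x s) t + deriv (fun y => v y t) x
        + deriv (fun y => η y t * v y t) x - iteratedDeriv 3 (fun y => v y t) x = 0)
    (heq2 : ∀ x t : ℝ,
      deriv (fun s => v x s) t + deriv (fun y => η y t) x
        + v x t * deriv (fun y => v y t) x = 0)
    (ρ j : ℕ → ℝ → ℝ → ℂ)
    (hρ1 : ∀ x t : ℝ,
      ρ 1 x t = (1 / 2) * (η x t : ℂ) + (Complex.I / 2) * (deriv (fun y => v y t) x : ℂ))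
    (hρ2 : ∀ x t : ℝ,
      ρ 2 x t = Complex.I * (v x t : ℂ) * ρ 1 x t - 2 * deriv (fun y => ρ 1 y t) x
        + (Complex.I / 2) * (v x t : ℂ))
    (hρrec : ∀ n : ℕ, 2 ≤ n → ∀ x t : ℝ,
      ρ (n + 1) x t = Complex.I * (v x t : ℂ) * ρ n x t - ρ (n - 1) x t
        - 2 * deriv (fun y => ρ n y t) x
        - 2 * ∑ k ∈ Finset.Icc 1 (n - 1), ρ k x t * ρ (n - k) x t)
    (hj1 : ∀ x t : ℝ,
      j 1 x t = (1 / 4) * (v x t : ℂ) + (1 / 2) * (v x t : ℂ) * ρ 1 x t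
        - (Complex.I / 2) * ρ 2 x t)
    (hjn : ∀ n : ℕ, 2 ≤ n → ∀ x t : ℝ,
      j n x t = (1 / 2) * (v x t : ℂ) * ρ n x t - (Complex.I / 2) * ρ (n + 1) x t
        + (Complex.I / 2) * ρ (n - 1) x t) :
    ∀ n : ℕ, 1 ≤ n → ∀ x t : ℝ,
      deriv (fun s => ρ n x s) t + deriv (fun y => j n y t) x = 0 := by
  refine stmt_18_general (fun x t => η x t) (fun x t => v x t)
    (Complex.ofRealCLM.contDiff.comp hη) (Complex.ofRealCLM.contDiff.comp hv)
    (fun x t => ?_) (fun x t => ?_) ρ j hρ1 hρ2 hρrec hj1 hjn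
  · simpa [KaupBroer.ofReal_deriv, KaupBroer.ofReal_iteratedDeriv]
      using congrArg Complex.ofReal (heq1 x t)
  · simpa [KaupBroer.ofReal_deriv] using congrArg Complex.ofReal (heq2 x t)
end
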